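/- arXiv:1102.2457 — 4 statements merged into one kernel-verified Lean document; each statement's English description precedes it below -/
import Mathlib

section
/- Let n ≥ 1, γ, δ ∈ ℂ and c_1,…,c_n, d_1,…,d_n ∈ ℂ with Re(γ) > 0, Re(δ) > 0 and Re(c_j) > 0, Re(d_j) > 0 for all 1 ≤ j ≤ n; set c_0 = d_0 = 0. Then, integrating each variable over the imaginary axis: (1/(4πi)^n)·∫_{z_1,…,z_n} ∏_{j=1}^{n} Γ_ℝ(c_{j−1}+γ+z_j)·Γ_ℝ(c_j+z_j)·Γ_ℝ(d_{j−1}+δ−z_j)·Γ_ℝ(d_j−z_j) dz_1⋯dz_n = [Γ_ℝ(c_1+δ)·Γ_ℝ(d_1+γ)·Γ_ℝ(γ+δ)·Γ_ℝ(c_n+d_n) / Γ_ℝ(γ+δ+c_n+d_n)] · (1/(4πi)^{n−1})·∫_{z_1,…,z_{n−1}} ∏_{j=1}^{n−1} Γ_ℝ(c_j+z_j)·Γ_ℝ(c_{j+1}+δ+z_j)·Γ_ℝ(d_j−z_j)·Γ_ℝ(d_{j+1}+γ−z_j) dz_1⋯dz_{n−1}. -/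
open MeasureTheory Complex

noncomputable section

/-- `Γ_ℝ(s) = π^{-s/2} Γ(s/2)`. -/
def GammaR (s : ℂ) : ℂ := (Real.pi : ℂ) ^ (-s / 2) * Complex.Gamma (s / 2)

/-- Modified Bessel function of the second kind, via its integral representation. -/
def BesselK (ν : ℂ) (y : ℝ) : ℂ :=
  (1 / 2) * ∫ t in Set.Ioi (0 : ℝ),
    Complex.exp (-((y : ℂ) / 2) * ((t : ℂ) + 1 / (t : ℂ))) * (t : ℂ) ^ ν / (t : ℂ)

/-- Extend a finite real tuple to `ℕ`, defaulting to `1`. -/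
def extR {k : ℕ} (t : Fin k → ℝ) : ℕ → ℝ := fun i => if h : i < k then t ⟨i, h⟩ else 1

/-- Extend a finite real tuple to `ℕ`, defaulting to `0`. -/
def extR0 {k : ℕ} (t : Fin k → ℝ) : ℕ → ℝ := fun i => if h : i < k then t ⟨i, h⟩ else 0

/-- The positive orthant. -/
def posSet (k : ℕ) : Set (Fin k → ℝ) := {t | ∀ j, 0 < t j}

/-- `|a| = a_1 + ⋯ + a_n` (0-based indexing). -/
def sumA (n : ℕ) (a : ℕ → ℂ) : ℂ := ∑ j ∈ Finset.range n, a j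

/-- `ã_j = a_{j+1} + a_1/(n-1)` (0-based indexing). -/
def tildeA (n : ℕ) (a : ℕ → ℂ) : ℕ → ℂ := fun j => a (j + 1) + a 0 / ((n : ℂ) - 1)

/-- The normalized radial part `Ŵ^A_{n,a}` of the class one `GL_n(ℝ)` Whittaker function,
as a function of `(y_1,…,y_{n-1})` (0-based indexing). -/
def WhittAr : ℕ → (ℕ → ℂ) → (ℕ → ℝ) → ℂ
  | 0, _, _ => 1
  | 1, _, _ => 1
  | 2, a, y => 2 * ((y 0 : ℂ) ^ ((a 0 + a 1) / 2)) *
      BesselK ((a 0 - a 1) / 2) (2 * Real.pi * y 0)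
  | (n + 3), a, y =>
      ∫ t in posSet (n + 2),
        WhittAr (n + 2) (tildeA (n + 3) a)
            (fun j => y (j + 1) * Real.sqrt (extR t (j + 1) / extR t j)) *
          (∏ j ∈ Finset.range (n + 2),
            Complex.exp (((-(Real.pi * y j) ^ 2 * extR t j - 1 / extR t j : ℝ) : ℂ)) *
              ((Real.pi * y j : ℝ) : ℂ) ^ ((((n + 2 - j : ℕ) : ℂ) * a 0) / ((n + 2 : ℕ) : ℂ)) *
              ((extR t j : ℝ) : ℂ) ^ ((((n + 3 : ℕ) : ℂ) * a 0) / (2 * ((n + 2 : ℕ) : ℂ)))) *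
          ((Real.pi * extR t (n + 1) : ℝ) : ℂ) ^ (-(sumA (n + 3) a) / 2) *
          (∏ j ∈ Finset.range (n + 2), ((extR t j : ℝ) : ℂ))⁻¹

/-- `Ŵ^A_{n,a}` as a function of the full tuple `(y_1,…,y_n)`. -/
def WhittAhat (n : ℕ) (a : ℕ → ℂ) (y : ℕ → ℝ) : ℂ :=
  ((y (n - 1) : ℝ) : ℂ) ^ sumA n a * WhittAr n a y

/-- The Mellin transform `U_{n,a}` (0-based: `s j` stands for `s_{j+1}`). -/
def Ufun (n : ℕ) (a : ℕ → ℂ) (s : ℕ → ℂ) : ℂ :=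
  ∫ y in posSet (n - 1),
    WhittAr n a (extR y) *
      ∏ j ∈ Finset.range (n - 1), ((extR y j : ℝ) : ℂ) ^ s j / ((extR y j : ℝ) : ℂ)

/-- The normalized radial part `Ŵ^B_{n,b}` of the class one `SO_{2n+1}(ℝ)` Whittaker function. -/
def WhittBr : ℕ → (ℕ → ℂ) → (ℕ → ℝ) → ℂ
  | 0, _, _ => 1
  | 1, b, y => 2 * BesselK (b 0 / 2) (2 * Real.pi * y 0)
  | (n + 2), b, y =>
      ∫ p in (posSet (n + 2) ×ˢ posSet (n + 1)),
        WhittBr (n + 1) b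
            (fun j =>
              if j < n then
                y (j + 1) *
                  Real.sqrt (extR p.1 (j + 1) * extR p.2 (j + 1) /
                    (extR p.1 (j + 2) * extR p.2 j))
              else y (n + 1) * Real.sqrt (extR p.1 (n + 1) / extR p.2 n)) *
          (∏ j ∈ Finset.range (n + 2),
            Complex.exp (((-(Real.pi * y j) ^ 2 * extR p.1 j - 1 / extR p.1 j : ℝ) : ℂ)) *
              ((Real.pi * y j : ℝ) : ℂ) ^ b (n + 1)) *
          (∏ j ∈ Finset.range (n + 1),
            Complex.exp (((-(Real.pi * y j) ^ 2 * (extR p.1 j / extR p.1 (j + 1)) * extR p.2 j -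
                  1 / extR p.2 j : ℝ) : ℂ)) *
              ((extR p.1 (j + 1) * extR p.2 j : ℝ) : ℂ) ^ (b (n + 1) / 2)) *
          ((extR p.1 0 : ℝ) : ℂ) ^ b (n + 1) *
          (∏ j ∈ Finset.range (n + 1), ((extR p.2 j : ℝ) : ℂ))⁻¹ *
          (∏ j ∈ Finset.range (n + 2), ((extR p.1 j : ℝ) : ℂ))⁻¹

/-- The Mellin transform `V_{n,b}` (0-based: `s j` stands for `s_{j+1}`). -/
def Vfun (n : ℕ) (b : ℕ → ℂ) (s : ℕ → ℂ) : ℂ :=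
  ∫ y in posSet n,
    WhittBr n b (extR y) *
      ∏ j ∈ Finset.range n, ((extR y j : ℝ) : ℂ) ^ s j / ((extR y j : ℝ) : ℂ)

/-- Integral over the vertical line `Re z = c`, i.e. `i·∫_ℝ f(c+it) dt`. -/
def VInt (c : ℝ) (f : ℂ → ℂ) : ℂ := Complex.I * ∫ t : ℝ, f (c + t * Complex.I)

/-- Iterated integral over `k` vertical lines with abscissas `c 0, …, c (k-1)`;
the integrand is fed the contour points as a 0-based sequence. -/
def VIntK (k : ℕ) (c : ℕ → ℝ) (f : (ℕ → ℂ) → ℂ) : ℂ :=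
  Complex.I ^ k * ∫ t : Fin k → ℝ, f (fun i => (c i : ℂ) + (extR0 t i : ℝ) * Complex.I)

open scoped FourierTransform

/-- The beta density transported to the real line by the sigmoid function. -/
def logisticBeta (a c : ℂ) (u : ℝ) : ℂ :=
  (Real.sigmoid u : ℂ) ^ a * (Real.sigmoid (-u) : ℂ) ^ c

theorem ofReal_sigmoid_ne_zero (u : ℝ) : (Real.sigmoid u : ℂ) ≠ 0 :=
  ofReal_ne_zero.mpr (Real.sigmoid_pos u).ne'

theorem logisticBeta_eq_abs_deriv_smul (a c : ℂ) (u : ℝ) :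
    logisticBeta a c u = |Real.sigmoid u * (1 - Real.sigmoid u)| •
      ((Real.sigmoid u : ℂ) ^ (a - 1) * (1 - (Real.sigmoid u : ℂ)) ^ (c - 1)) := by
  have h2 : (1 - (Real.sigmoid u : ℂ)) = (Real.sigmoid (-u) : ℂ) := by
    rw [Real.sigmoid_neg]; push_cast; rfl
  rw [← Real.sigmoid_neg,
    abs_of_pos (mul_pos (Real.sigmoid_pos u) (Real.sigmoid_pos (-u))), h2, real_smul,
    cpow_sub _ _ (ofReal_sigmoid_ne_zero u), cpow_sub _ _ (ofReal_sigmoid_ne_zero (-u)),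
    cpow_one, cpow_one, logisticBeta]
  have := ofReal_sigmoid_ne_zero u
  have := ofReal_sigmoid_ne_zero (-u)
  push_cast
  field_simp

theorem integrable_logisticBeta {a c : ℂ} (ha : 0 < a.re) (hc : 0 < c.re) :
    Integrable (logisticBeta a c) := by
  have h := (intervalIntegrable_iff_integrableOn_Ioo_of_le zero_le_one).mp
    (betaIntegral_convergent ha hc)
  rw [← Real.range_sigmoid, ← Set.image_univ,
    integrableOn_image_iff_integrableOn_abs_deriv_smul MeasurableSet.univ
      (fun x _ => (Real.hasDerivAt_sigmoid x).hasDerivWithinAt) Real.sigmoid_injective.injOn,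
    integrableOn_univ] at h
  simpa only [← logisticBeta_eq_abs_deriv_smul] using h

theorem integral_logisticBeta (a c : ℂ) : ∫ u, logisticBeta a c u = betaIntegral a c := by
  rw [betaIntegral, intervalIntegral.integral_of_le zero_le_one, integral_Ioc_eq_integral_Ioo,
    ← Real.range_sigmoid, ← Set.image_univ,
    integral_image_eq_integral_abs_deriv_smul MeasurableSet.univ
      (fun x _ => (Real.hasDerivAt_sigmoid x).hasDerivWithinAt) Real.sigmoid_injective.injOn,
    setIntegral_univ]
  simp only [← logisticBeta_eq_abs_deriv_smul]

theorem continuous_logisticBeta (a c : ℂ) : Continuous (logisticBeta a c) := by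
  refine .mul (.cpow (continuous_ofReal.comp continuous_sigmoid) continuous_const fun u => ?_)
    (.cpow (continuous_ofReal.comp (continuous_sigmoid.comp continuous_neg)) continuous_const
      fun u => ?_) <;>
  exact ofReal_mem_slitPlane.mpr (Real.sigmoid_pos _)

theorem norm_logisticBeta (a c : ℂ) (u : ℝ) :
    ‖logisticBeta a c u‖ = Real.sigmoid u ^ a.re * Real.sigmoid (-u) ^ c.re := by
  rw [logisticBeta, norm_mul, norm_cpow_eq_rpow_re_of_pos (Real.sigmoid_pos _),
    norm_cpow_eq_rpow_re_of_pos (Real.sigmoid_pos _)]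

theorem logisticBeta_mul (a b c d : ℂ) (u : ℝ) :
    logisticBeta a c u * logisticBeta b d u = logisticBeta (a + b) (c + d) u := by
  simp only [logisticBeta, cpow_add _ _ (ofReal_sigmoid_ne_zero _)]
  ring

theorem logisticBeta_neg (a c : ℂ) (u : ℝ) : logisticBeta a c (-u) = logisticBeta c a u := by
  rw [logisticBeta, logisticBeta, neg_neg, mul_comm]

theorem exp_eq_logisticBeta (z : ℂ) (u : ℝ) : cexp (u * z) = logisticBeta z (-z) u := by
  have h : Real.sigmoid (-u) * Real.exp u = Real.sigmoid u := by
    simpa using Real.sigmoid_mul_rexp_neg (-u)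
  rw [logisticBeta, ← h, ofReal_mul, mul_cpow_ofReal_nonneg (Real.sigmoid_nonneg _)
    (Real.exp_pos u).le, cpow_neg, mul_right_comm, mul_inv_cancel₀, one_mul,
    cpow_def_of_ne_zero (by simp), ← ofReal_log (Real.exp_pos u).le, Real.log_exp]
  simp [cpow_eq_zero_iff, (Real.sigmoid_pos (-u)).ne']

theorem fourier_logisticBeta (a c : ℂ) (ξ : ℝ) :
    𝓕 (logisticBeta a c) ξ =
      betaIntegral (a - 2 * Real.pi * ξ * I) (c + 2 * Real.pi * ξ * I) := by
  rw [Real.fourier_real_eq_integral_exp_smul, ← integral_logisticBeta]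
  congr 1 with u
  rw [show ((-2 * Real.pi * u * ξ : ℝ) : ℂ) * I = u * (-(2 * Real.pi * ξ * I)) by push_cast; ring,
    exp_eq_logisticBeta, smul_eq_mul, logisticBeta_mul]
  ring_nf

theorem betaIntegral_eq_mul_betaIntegral_add_one {u v : ℂ} (hu : 0 < u.re) (hv : 0 < v.re) :
    betaIntegral u v =
      (u + v) * (u + v + 1) * betaIntegral (u + 1) (v + 1) * (u⁻¹ * v⁻¹) := by
  have h0 : u ≠ 0 := fun h => by simp [h] at hu
  have h1 : v ≠ 0 := fun h => by simp [h] at hv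
  have huv : 0 < (u + v).re := by simp; linarith
  have h2 : u + v ≠ 0 := fun h => by simp [h] at huv
  have huv' : 0 < (u + v + 1).re := by rw [add_re, one_re]; linarith
  have h3 : u + v + 1 ≠ 0 := fun h => by simp [h] at huv'
  have e1 := Gamma_mul_Gamma_eq_betaIntegral hu hv
  have e2 := Gamma_mul_Gamma_eq_betaIntegral (s := u + 1) (t := v + 1)
    (by simp; linarith) (by simp; linarith)
  rw [Gamma_add_one _ h0, Gamma_add_one _ h1, show u + 1 + (v + 1) = u + v + 1 + 1 by ring,
    Gamma_add_one _ h3, Gamma_add_one _ h2] at e2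
  have hG := Gamma_ne_zero_of_re_pos huv
  apply mul_left_cancel₀ hG
  rw [← e1]
  field_simp
  linear_combination e2

theorem integrable_inv_norm_add_mul_I_sq {b : ℂ} (hb : 0 < b.re) {r : ℝ} (hr : r ≠ 0) :
    Integrable fun ξ : ℝ => (‖b + r * ξ * I‖ ^ 2)⁻¹ := by
  have h := ((integrable_inv_one_add_sq.comp_add_right (b.im / b.re)).comp_mul_left'
    (div_ne_zero hr hb.ne')).const_mul ((b.re ^ 2)⁻¹)
  refine h.congr (.of_forall fun ξ => ?_)
  have : ‖b + r * ξ * I‖ ^ 2 = b.re ^ 2 + (b.im + r * ξ) ^ 2 := by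
    rw [← normSq_eq_norm_sq, normSq_apply]; simp; ring
  simp only [this]
  rw [← mul_inv]
  congr 1
  field_simp
  ring

theorem integrable_fourier_logisticBeta {b d : ℂ} (hb : 0 < b.re) (hd : 0 < d.re) :
    Integrable (𝓕 (logisticBeta b d)) := by
  have hcont : Continuous (𝓕 (logisticBeta b d)) :=
    VectorFourier.fourierIntegral_continuous Real.continuous_fourierChar
      continuous_inner (integrable_logisticBeta hb hd)
  set C : ℝ := ‖(b + d) * (b + d + 1)‖ * ∫ u, ‖logisticBeta (b + 1) (d + 1) u‖
  have hC : 0 ≤ C := by positivity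
  have h := ((integrable_inv_norm_add_mul_I_sq hb
    (r := -(2 * Real.pi)) (by simp [Real.pi_ne_zero])).add
    (integrable_inv_norm_add_mul_I_sq hd
      (r := 2 * Real.pi) (by simp [Real.pi_ne_zero]))).const_mul C
  refine h.mono' hcont.aestronglyMeasurable (.of_forall fun ξ => ?_)
  have e1 : b - 2 * Real.pi * ξ * I = b + (-(2 * Real.pi) : ℝ) * ξ * I := by push_cast; ring
  have e2 : d + 2 * Real.pi * ξ * I = d + (2 * Real.pi : ℝ) * ξ * I := by push_cast; ring
  rw [fourier_logisticBeta, e1, e2, Pi.add_apply]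
  set x := b + (-(2 * Real.pi) : ℝ) * ξ * I with hx
  set y := d + (2 * Real.pi : ℝ) * ξ * I with hy
  have hxr : x.re = b.re := by simp [hx]
  have hyr : y.re = d.re := by simp [hy]
  have hxy : x + y = b + d := by rw [hx, hy]; push_cast; ring
  rw [betaIntegral_eq_mul_betaIntegral_add_one (hxr ▸ hb) (hyr ▸ hd), hxy, norm_mul, norm_mul]
  have hB : ‖betaIntegral (x + 1) (y + 1)‖ ≤ ∫ u, ‖logisticBeta (b + 1) (d + 1) u‖ := by
    rw [← integral_logisticBeta]
    refine (norm_integral_le_integral_norm _).trans_eq ?_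
    simp only [norm_logisticBeta, add_re, hxr, hyr]
  have hAM : ‖x⁻¹ * y⁻¹‖ ≤ (‖x‖ ^ 2)⁻¹ + (‖y‖ ^ 2)⁻¹ := by
    rw [norm_mul, norm_inv, norm_inv, ← inv_pow, ← inv_pow]
    nlinarith [sq_nonneg (‖x‖⁻¹ - ‖y‖⁻¹), sq_nonneg ‖x‖⁻¹, sq_nonneg ‖y‖⁻¹]
  exact mul_le_mul (mul_le_mul_of_nonneg_left hB (norm_nonneg _)) hAM (norm_nonneg _) hC

theorem integral_fourier_mul_fourier {f g : ℝ → ℂ} (hf : Integrable f) (hg : Integrable g)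
    (hgc : Continuous g) (hg' : Integrable (𝓕 g)) :
    ∫ ξ, 𝓕 f ξ * 𝓕 g ξ = ∫ u, f u * g (-u) := by
  have h := VectorFourier.integral_fourierIntegral_smul_eq_flip (L := innerₗ ℝ)
    (μ := volume) (ν := volume) Real.continuous_fourierChar
    continuous_inner hf hg'
  rw [flip_innerₗ] at h
  refine Eq.trans h ?_
  congr 1 with u
  rw [smul_eq_mul, ← congrFun (hgc.fourierInv_fourier_eq hg hg') (-u),
    Real.fourierInv_eq_fourier_neg, neg_neg]
  rfl

/-- **Barnes first lemma**, for a straight contour. -/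
theorem integral_Gamma_mul_eq {a b c d : ℂ} (ha : 0 < a.re) (hb : 0 < b.re) (hc : 0 < c.re)
    (hd : 0 < d.re) :
    ∫ ξ : ℝ, Gamma (a - 2 * Real.pi * ξ * I) * Gamma (b - 2 * Real.pi * ξ * I) *
        Gamma (c + 2 * Real.pi * ξ * I) * Gamma (d + 2 * Real.pi * ξ * I) =
      Gamma (a + c) * Gamma (a + d) * Gamma (b + c) * Gamma (b + d) / Gamma (a + b + c + d) := by
  have key : ∫ ξ, 𝓕 (logisticBeta a c) ξ * 𝓕 (logisticBeta b d) ξ =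
      betaIntegral (a + d) (c + b) := by
    rw [integral_fourier_mul_fourier (integrable_logisticBeta ha hc)
      (integrable_logisticBeta hb hd) (continuous_logisticBeta b d)
      (integrable_fourier_logisticBeta hb hd)]
    simp only [logisticBeta_neg, logisticBeta_mul, integral_logisticBeta]
  have hsum : Gamma (a + b + c + d) ≠ 0 :=
    Gamma_ne_zero_of_re_pos (by simp only [add_re]; linarith)
  have hpair : ∀ ξ : ℝ, Gamma (a - 2 * Real.pi * ξ * I) * Gamma (b - 2 * Real.pi * ξ * I) *
        Gamma (c + 2 * Real.pi * ξ * I) * Gamma (d + 2 * Real.pi * ξ * I) =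
      Gamma (a + c) * Gamma (b + d) *
        (𝓕 (logisticBeta a c) ξ * 𝓕 (logisticBeta b d) ξ) := fun ξ => by
    have e1 := Gamma_mul_Gamma_eq_betaIntegral (s := a - 2 * Real.pi * ξ * I)
      (t := c + 2 * Real.pi * ξ * I) (by simpa using ha) (by simpa using hc)
    have e2 := Gamma_mul_Gamma_eq_betaIntegral (s := b - 2 * Real.pi * ξ * I)
      (t := d + 2 * Real.pi * ξ * I) (by simpa using hb) (by simpa using hd)
    rw [sub_add_add_cancel] at e1 e2
    rw [fourier_logisticBeta, fourier_logisticBeta, mul_mul_mul_comm (Gamma (a + c)), ← e1, ← e2]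
    ring
  have e3 := Gamma_mul_Gamma_eq_betaIntegral (s := a + d) (t := c + b)
    (by simp only [add_re]; linarith) (by simp only [add_re]; linarith)
  simp only [hpair]
  rw [integral_const_mul, key, eq_div_iff hsum]
  rw [show a + d + (c + b) = a + b + c + d by ring, add_comm c b] at e3
  rw [add_comm c b]
  linear_combination (-Gamma (a + c) * Gamma (b + d)) * e3

theorem GammaR_ne_zero_of_re_pos {s : ℂ} (hs : 0 < s.re) : GammaR s ≠ 0 :=
  Gammaℝ_ne_zero_of_re_pos hs

/-- **Barnes first lemma** for `Γ_ℝ`. -/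
theorem integral_GammaR_mul_eq {a b c d : ℂ} (ha : 0 < a.re) (hb : 0 < b.re) (hc : 0 < c.re)
    (hd : 0 < d.re) :
    (4 * (Real.pi : ℂ) * I)⁻¹ * (I * ∫ t : ℝ, GammaR (a + t * I) * GammaR (b + t * I) *
        GammaR (c - t * I) * GammaR (d - t * I)) =
      GammaR (a + c) * GammaR (a + d) * GammaR (b + c) * GammaR (b + d) /
        GammaR (a + b + c + d) := by
  have hpi : (Real.pi : ℂ) ≠ 0 := ofReal_ne_zero.mpr Real.pi_ne_zero
  have hsub := Measure.integral_comp_mul_left (fun t : ℝ => GammaR (a + t * I) *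
    GammaR (b + t * I) * GammaR (c - t * I) * GammaR (d - t * I)) (-(4 * Real.pi))
  have habs : |(-(4 * Real.pi))⁻¹| = (4 * Real.pi)⁻¹ := by
    rw [abs_inv, abs_neg, abs_of_pos (by positivity)]
  have hint : ∀ ξ : ℝ, GammaR (a + (-(4 * Real.pi) * ξ : ℝ) * I) *
      GammaR (b + (-(4 * Real.pi) * ξ : ℝ) * I) * GammaR (c - (-(4 * Real.pi) * ξ : ℝ) * I) *
      GammaR (d - (-(4 * Real.pi) * ξ : ℝ) * I) = (Real.pi : ℂ) ^ (-(a + b + c + d) / 2) *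
        (Gamma (a / 2 - 2 * Real.pi * ξ * I) * Gamma (b / 2 - 2 * Real.pi * ξ * I) *
        Gamma (c / 2 + 2 * Real.pi * ξ * I) * Gamma (d / 2 + 2 * Real.pi * ξ * I)) := fun ξ => by
    have hpow : (Real.pi : ℂ) ^ (-(a + b + c + d) / 2) =
        (Real.pi : ℂ) ^ (-(a + (-(4 * Real.pi) * ξ : ℝ) * I) / 2) *
        (Real.pi : ℂ) ^ (-(b + (-(4 * Real.pi) * ξ : ℝ) * I) / 2) *
        (Real.pi : ℂ) ^ (-(c - (-(4 * Real.pi) * ξ : ℝ) * I) / 2) *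
        (Real.pi : ℂ) ^ (-(d - (-(4 * Real.pi) * ξ : ℝ) * I) / 2) := by
      rw [← cpow_add _ _ hpi, ← cpow_add _ _ hpi, ← cpow_add _ _ hpi]
      ring_nf
    have hadd (z : ℂ) : (z + (-(4 * Real.pi) * ξ : ℝ) * I) / 2 =
        z / 2 - 2 * Real.pi * ξ * I := by push_cast; ring
    have hsub (z : ℂ) : (z - (-(4 * Real.pi) * ξ : ℝ) * I) / 2 =
        z / 2 + 2 * Real.pi * ξ * I := by push_cast; ring
    simp only [GammaR, hpow, hadd, hsub]
    ring
  have hhalf {z : ℂ} (hz : 0 < z.re) : 0 < (z / 2).re := by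
    rw [show (2 : ℂ) = (2 : ℝ) by norm_num, div_ofReal_re]; positivity
  simp only [hint] at hsub
  rw [integral_const_mul, integral_Gamma_mul_eq (hhalf ha) (hhalf hb) (hhalf hc) (hhalf hd),
    habs, real_smul] at hsub
  have hpre (J : ℂ) : (4 * (Real.pi : ℂ) * I)⁻¹ * (I * J) = ((4 * Real.pi)⁻¹ : ℝ) * J := by
    push_cast
    field_simp
  rw [hpre, ← hsub]
  have hpow : (Real.pi : ℂ) ^ (-(a + b + c + d) / 2) * (Real.pi : ℂ) ^ (-(a + b + c + d) / 2) =
      (Real.pi : ℂ) ^ (-(a + c) / 2) * (Real.pi : ℂ) ^ (-(a + d) / 2) *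
        (Real.pi : ℂ) ^ (-(b + c) / 2) * (Real.pi : ℂ) ^ (-(b + d) / 2) := by
    rw [← cpow_add _ _ hpi, ← cpow_add _ _ hpi, ← cpow_add _ _ hpi, ← cpow_add _ _ hpi]
    ring_nf
  have hpow0 : (Real.pi : ℂ) ^ (-(a + b + c + d) / 2) ≠ 0 := by simp [cpow_eq_zero_iff, hpi]
  have hG0 : Gamma ((a + b + c + d) / 2) ≠ 0 :=
    Gamma_ne_zero_of_re_pos (hhalf (by simp only [add_re]; linarith))
  simp only [GammaR, ← add_div]
  rw [← mul_div_assoc, div_eq_div_iff hG0 (mul_ne_zero hpow0 hG0)]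
  linear_combination (Gamma ((a + b + c + d) / 2) * Gamma ((a + c) / 2) * Gamma ((a + d) / 2) * Gamma ((b + c) / 2) *
    Gamma ((b + d) / 2)) * hpow

theorem prod_Icc_one_eq_prod_range {M : Type*} [CommMonoid M] (f : ℕ → M) (k : ℕ) :
    ∏ j ∈ Finset.Icc 1 k, f j = ∏ i ∈ Finset.range k, f (i + 1) := by
  rw [Finset.range_eq_Ico, Finset.prod_Ico_add' f 0 k 1, zero_add, Finset.Ico_add_one_right_eq_Icc]

theorem inv_pow_mul_VIntK_prod (w : ℂ) (k : ℕ) (f : ℕ → ℂ → ℂ) :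
    (w ^ k)⁻¹ * VIntK k (fun _ => 0) (fun z => ∏ j ∈ Finset.Icc 1 k, f j (z (j - 1))) =
      ∏ i ∈ Finset.range k, (w⁻¹ * (I * ∫ t : ℝ, f (i + 1) (t * I))) := by
  simp only [Finset.prod_mul_distrib, Finset.prod_const, Finset.card_range]
  rw [inv_pow,
    ← Fin.prod_univ_eq_prod_range (fun i => ∫ t : ℝ, f (i + 1) (t * I)),
    ← integral_fintype_prod_volume_eq_prod (fun (i : Fin k) (t : ℝ) => f (i + 1) (t * I)), VIntK]
  congr 3 with t
  rw [prod_Icc_one_eq_prod_range, ← Fin.prod_univ_eq_prod_range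
    (fun i => f (i + 1) (((0 : ℝ) : ℂ) + (extR0 t (i + 1 - 1) : ℝ) * I))]
  simp [extR0]

theorem prod_range_telescope {K : Type*} [Field K] (G H P D : ℕ → K) (hD : D 0 = G 1) (m : ℕ)
    (hG : ∀ i ≤ m, G (i + 1) ≠ 0) :
    ∏ i ∈ Finset.range (m + 1), G i * P i * H (i + 1) / D i =
      P 0 * G 0 * H (m + 1) / G (m + 1) *
        ∏ i ∈ Finset.range m, H (i + 1) * P (i + 1) * G (i + 2) / D (i + 1) := by
  induction m with
  | zero => simp [hD, mul_comm]
  | succ m ih =>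
    have h1 := hG m m.le_succ
    have h2 := hG (m + 1) le_rfl
    rw [Finset.prod_range_succ, ih fun i hi => hG i (hi.trans m.le_succ),
      Finset.prod_range_succ _ m]
    simp only [div_eq_mul_inv]
    field_simp

/-- Barnes-type lemma (Lemma 1.7(1) of Ishii–Stade). -/
theorem barnes_iterated_identity_one
    (n : ℕ) (hn : 1 ≤ n) (γ δ : ℂ) (c d : ℕ → ℂ)
    (hγ : 0 < γ.re) (hδ : 0 < δ.re)
    (hc0 : c 0 = 0) (hd0 : d 0 = 0)
    (hc : ∀ j, 1 ≤ j → j ≤ n → 0 < (c j).re)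
    (hd : ∀ j, 1 ≤ j → j ≤ n → 0 < (d j).re) :
    ((4 * (Real.pi : ℂ) * Complex.I) ^ n)⁻¹ *
      VIntK n (fun _ => 0) (fun z =>
        ∏ j ∈ Finset.Icc 1 n,
          GammaR (c (j - 1) + γ + z (j - 1)) * GammaR (c j + z (j - 1)) *
            GammaR (d (j - 1) + δ - z (j - 1)) * GammaR (d j - z (j - 1))) =
    GammaR (c 1 + δ) * GammaR (d 1 + γ) * GammaR (γ + δ) * GammaR (c n + d n) /
        GammaR (γ + δ + c n + d n) *
      (((4 * (Real.pi : ℂ) * Complex.I) ^ (n - 1))⁻¹ *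
        VIntK (n - 1) (fun _ => 0) (fun z =>
          ∏ j ∈ Finset.Icc 1 (n - 1),
            GammaR (c j + z (j - 1)) * GammaR (c (j + 1) + δ + z (j - 1)) *
              GammaR (d j - z (j - 1)) * GammaR (d (j + 1) + γ - z (j - 1)))) := by
  obtain ⟨m, rfl⟩ : ∃ m, n = m + 1 := ⟨n - 1, by omega⟩
  have hc' : ∀ j ≤ m + 1, 0 ≤ (c j).re := fun j hj => by
    rcases j.eq_zero_or_pos with rfl | h
    · simp [hc0]
    · exact (hc j h hj).le
  have hd' : ∀ j ≤ m + 1, 0 ≤ (d j).re := fun j hj => by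
    rcases j.eq_zero_or_pos with rfl | h
    · simp [hd0]
    · exact (hd j h hj).le
  rw [add_tsub_cancel_right,
    inv_pow_mul_VIntK_prod _ (m + 1) (fun j z => GammaR (c (j - 1) + γ + z) * GammaR (c j + z) *
      GammaR (d (j - 1) + δ - z) * GammaR (d j - z)),
    inv_pow_mul_VIntK_prod _ m (fun j z => GammaR (c j + z) * GammaR (c (j + 1) + δ + z) *
      GammaR (d j - z) * GammaR (d (j + 1) + γ - z))]
  have hG : ∀ i ≤ m, GammaR (γ + δ + c (i + 1) + d (i + 1)) ≠ 0 := fun i hi => by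
    have h1 := hc' (i + 1) (by omega)
    have h2 := hd' (i + 1) (by omega)
    exact GammaR_ne_zero_of_re_pos (by simp only [add_re]; linarith)
  have key := prod_range_telescope (fun i => GammaR (γ + δ + c i + d i))
    (fun i => GammaR (c i + d i))
    (fun i => GammaR (c (i + 1) + d i + δ) * GammaR (c i + d (i + 1) + γ))
    (fun i => GammaR (γ + δ + c i + d i + c (i + 1) + d (i + 1)))
    (by simp [hc0, hd0]) m hG
  simp only [hc0, hd0, zero_add, add_zero] at key
  refine Eq.trans (Finset.prod_congr rfl fun i hi => ?_) (key.trans (congrArg₂ _ rfl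
    (Finset.prod_congr rfl fun i hi => ?_)))
  · have hi := Finset.mem_range.mp hi
    have h1 := hc' i (by omega)
    have h2 := hd' i (by omega)
    rw [add_tsub_cancel_right, integral_GammaR_mul_eq (by simp only [add_re]; linarith)
      (hc _ (by omega) (by omega)) (by simp only [add_re]; linarith) (hd _ (by omega) (by omega))]
    ring_nf
  · have hi := Finset.mem_range.mp hi
    have h1 := hc' (i + 2) (by omega)
    have h2 := hd' (i + 2) (by omega)
    rw [integral_GammaR_mul_eq (hc _ (by omega) (by omega)) (by simp only [add_re]; linarith)
      (hd _ (by omega) (by omega)) (by simp only [add_re]; linarith)]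
    ring_nf

end
end

section
/- Let n ≥ 2 and x_1,…,x_{n−1} ∈ ℝ; put q_j := 1 + ∑_{p=j}^{n−1} x_p² for 1 ≤ j ≤ n−1 and q_n := 1. Let x' = (x'_{j,k}) be any real (n−1)×(n−1) upper triangular matrix with unit diagonal, and define the n×n upper triangular unit-diagonal matrix x = (x_{j,k}) by: x_{j,k} := √(q_j·q_{k+1}/(q_{j+1}·q_k))·(x'_{j,k} − ∑_{ℓ=j}^{k−1} x_ℓ·x_k·√(q_k/(q_ℓ·q_{ℓ+1}·q_{k+1}))·x'_{j,ℓ}) for 1 ≤ j < k ≤ n−1 (with the convention x'_{j,j} = 1), and x_{j,n} := ∑_{ℓ=j}^{n−1} x_{j,ℓ}·x_ℓ for 1 ≤ j ≤ n−1 (with x_{j,j} = 1). Then for every 1 ≤ m ≤ n−1: Δ_{n,m}(x) = (q_1/q_{m+1})·Δ_{n−1,m}(x'). -/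
open MeasureTheory Complex

noncomputable section

/-- `Δ_{N,m}(y)`: the sum of the squares of the `m × m` minors formed from the
top `m` rows of `y`. -/
def Delta (N m : ℕ) (hm : m ≤ N) (y : Matrix (Fin N) (Fin N) ℝ) : ℝ :=
  ∑ S ∈ (Finset.univ : Finset (Fin N)).powersetCard m,
    if h : S.card = m then
      (Matrix.det (Matrix.of fun i j : Fin m =>
        y (Fin.castLE hm i) ((S.orderIsoOfFin h j : Fin N)))) ^ 2
    else 0

theorem Matrix.det_mul_eq_sum_prod_mul_det_submatrix {m ι R : Type*} [Fintype m] [DecidableEq m]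
    [Fintype ι] [CommRing R] (A : Matrix m ι R) (B : Matrix ι m R) :
    (A * B).det = ∑ p : m → ι, (∏ i, A i (p i)) * (B.submatrix p id).det := by
  classical
  have hrow : A * B = fun i => ∑ k, A i k • B k := by
    ext i j
    simp [Matrix.mul_apply, Finset.sum_apply]
  rw [hrow]
  change Matrix.detRowAlternating.toMultilinearMap _ = _
  rw [MultilinearMap.map_sum]
  refine Finset.sum_congr rfl fun p _ => ?_
  rw [MultilinearMap.map_smul_univ]
  rfl

/-- The terms of the Cauchy–Binet expansion whose column choice is a rearrangement of `e`. -/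
theorem Matrix.sum_perm_prod_mul_det_submatrix {m ι R : Type*} [Fintype m] [DecidableEq m]
    [CommRing R] (A : Matrix m ι R) (B : Matrix ι m R) (e : m → ι) :
    ∑ σ : Equiv.Perm m, (∏ i, A i (e (σ i))) * (B.submatrix (e ∘ σ) id).det =
      (A.submatrix id e).det * (B.submatrix e id).det := by
  rw [← Matrix.det_transpose (A.submatrix id e), Matrix.det_apply', Finset.sum_mul]
  refine Finset.sum_congr rfl fun σ _ => ?_
  have h : B.submatrix (e ∘ σ) id = (B.submatrix e id).submatrix σ id := rfl
  rw [h, Matrix.det_permute]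
  simp only [Matrix.transpose_apply, Matrix.submatrix_apply, id]
  ring

/-- The **Cauchy–Binet formula**. -/
theorem Matrix.det_mul_eq_sum_powersetCard {m : ℕ} {ι R : Type*} [Fintype ι] [LinearOrder ι]
    [CommRing R] (A : Matrix (Fin m) ι R) (B : Matrix ι (Fin m) R) :
    (A * B).det = ∑ S ∈ (Finset.univ : Finset ι).powersetCard m,
      if h : S.card = m then
        (A.submatrix id (S.orderEmbOfFin h)).det * (B.submatrix (S.orderEmbOfFin h) id).det
      else 0 := by
  classical
  rw [Matrix.det_mul_eq_sum_prod_mul_det_submatrix,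
    ← Finset.sum_fiberwise Finset.univ (fun p : Fin m → ι => Finset.univ.image p)]
  symm
  refine Finset.sum_subset_zero_on_sdiff (Finset.subset_univ _) ?_ ?_
  · intro S hS
    refine Finset.sum_eq_zero fun p hp => ?_
    have himage : Finset.univ.image p = S := by simpa using hp
    have hp_inj : ¬ Function.Injective p := by
      intro hinj
      apply (Finset.mem_sdiff.mp hS).2
      rw [Finset.mem_powersetCard, ← himage, Finset.card_image_of_injective _ hinj]
      simp
    obtain ⟨i, j, hij, hne⟩ : ∃ i j, p i = p j ∧ i ≠ j := by
      simpa [Function.Injective] using hp_inj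
    rw [Matrix.det_zero_of_row_eq hne (by ext k; simp [hij]), mul_zero]
  · intro S hS
    have hcard : S.card = m := (Finset.mem_powersetCard.mp hS).2
    rw [dif_pos hcard, ← Matrix.sum_perm_prod_mul_det_submatrix]
    refine Finset.sum_bij (fun σ _ => S.orderEmbOfFin hcard ∘ σ) ?_ ?_ ?_ ?_
    · intro σ _
      simp only [Finset.mem_filter, Finset.mem_univ, true_and]
      rw [← Finset.image_image, Finset.image_univ_equiv]
      exact Finset.image_orderEmbOfFin_univ S hcard
    · intro σ _ τ _ h
      ext i
      exact congrArg Fin.val ((S.orderEmbOfFin hcard).injective (congrFun h i))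
    · intro p hp
      have himage : Finset.univ.image p = S := by simpa using hp
      have hmem (i : Fin m) : ∃ j, S.orderEmbOfFin hcard j = p i := by
        have : p i ∈ Set.range (S.orderEmbOfFin hcard) := by
          rw [Finset.range_orderEmbOfFin, ← himage]
          simp
        exact this
      choose σ hσ using hmem
      have hp_inj : Function.Injective p := by
        have : (Finset.univ.image p).card = (Finset.univ : Finset (Fin m)).card := by
          rw [himage, hcard, Finset.card_univ, Fintype.card_fin]
        simpa using Finset.card_image_iff.mp this
      have hσ_inj : Function.Injective σ := fun i j h => hp_inj (by rw [← hσ, ← hσ, h])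
      exact ⟨Equiv.ofBijective σ (Finite.injective_iff_bijective.mp hσ_inj), Finset.mem_univ _,
        funext hσ⟩
    · intro σ _
      rfl

theorem Delta_eq_det_mul_transpose {N m : ℕ} (hm : m ≤ N) (y : Matrix (Fin N) (Fin N) ℝ) :
    Delta N m hm y =
      (y.submatrix (Fin.castLE hm) id * (y.submatrix (Fin.castLE hm) id).transpose).det := by
  rw [Matrix.det_mul_eq_sum_powersetCard, Delta]
  refine Finset.sum_congr rfl fun S _ => ?_
  split_ifs with h
  · subst h
    rw [sq]
    congr 1
    rw [← Matrix.det_transpose]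
    rfl
  · rfl

theorem Fin.sum_univ_eq_sum_Icc_one {M : Type*} [AddCommMonoid M] (N : ℕ) (f : ℕ → M) :
    ∑ i : Fin N, f (i + 1) = ∑ i ∈ Finset.Icc 1 N, f i := by
  rw [Fin.sum_univ_eq_sum_range (fun i => f (i + 1)), Finset.range_eq_Ico,
    Finset.sum_Ico_add' f 0 N 1]
  rfl

/-- An upper triangular array inverting the rank-one perturbation `1 + x xᵀ`, where `u j ^ 2` is
meant to be `1 + ∑ p ∈ Icc j N, x p ^ 2`. -/
def rankOneFactor (x u : ℕ → ℝ) (j k : ℕ) : ℝ :=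
  if j = k then u (j + 1) / u j else if j < k then -(x j * x k) / (u j * u (j + 1)) else 0

section RankOneFactor

variable {N : ℕ} {x u : ℕ → ℝ}

theorem sum_Icc_ite_lt (f : ℕ → ℝ) (a : ℕ) :
    ∑ k ∈ Finset.Icc 1 N, (if a < k then f k else 0) = ∑ k ∈ Finset.Icc (a + 1) N, f k := by
  rw [← Finset.sum_filter]
  congr 1
  ext k
  simp only [Finset.mem_filter, Finset.mem_Icc]
  omega

theorem sq_eq_sq_add_succ (hsq : ∀ j, u j ^ 2 = 1 + ∑ p ∈ Finset.Icc j N, x p ^ 2) {a : ℕ}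
    (ha : a ≤ N) : u a ^ 2 = x a ^ 2 + u (a + 1) ^ 2 := by
  rw [hsq, hsq, ← Finset.add_sum_Ioc_eq_sum_Icc ha, ← Finset.Icc_add_one_left_eq_Ioc]
  ring

theorem sum_rankOneFactor_mul (hu : ∀ j, 0 < u j)
    (hsq : ∀ j, u j ^ 2 = 1 + ∑ p ∈ Finset.Icc j N, x p ^ 2) {a : ℕ} (ha : a ∈ Finset.Icc 1 N) :
    ∑ k ∈ Finset.Icc 1 N, rankOneFactor x u a k * x k = x a / (u a * u (a + 1)) := by
  have h1 : ∀ k ∈ Finset.Icc 1 N, rankOneFactor x u a k * x k =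
      (if a = k then u (a + 1) / u a * x a else 0) +
        -x a / (u a * u (a + 1)) * (if a < k then x k ^ 2 else 0) := by
    intro k _
    unfold rankOneFactor
    rcases lt_trichotomy a k with h | h | h
    · simp [h, h.ne]; ring
    · subst h; simp
    · simp [h.ne', h.not_gt]
  rw [Finset.sum_congr rfl h1, Finset.sum_add_distrib, Finset.sum_ite_eq, if_pos ha,
    ← Finset.mul_sum, sum_Icc_ite_lt]
  have h2 : ∑ p ∈ Finset.Icc (a + 1) N, x p ^ 2 = u (a + 1) ^ 2 - 1 := by rw [hsq]; ring
  have h3 := (hu a).ne'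
  have h4 := (hu (a + 1)).ne'
  rw [h2]
  field_simp
  ring

theorem sum_rankOneFactor_mul_self (hu : ∀ j, 0 < u j)
    (hsq : ∀ j, u j ^ 2 = 1 + ∑ p ∈ Finset.Icc j N, x p ^ 2) {a : ℕ} (ha : a ∈ Finset.Icc 1 N) :
    ∑ k ∈ Finset.Icc 1 N, rankOneFactor x u a k * rankOneFactor x u a k +
      x a / (u a * u (a + 1)) * (x a / (u a * u (a + 1))) = 1 := by
  have h1 : ∀ k ∈ Finset.Icc 1 N, rankOneFactor x u a k * rankOneFactor x u a k =
      (if a = k then (u (a + 1) / u a) ^ 2 else 0) +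
        (x a / (u a * u (a + 1))) ^ 2 * (if a < k then x k ^ 2 else 0) := by
    intro k _
    unfold rankOneFactor
    rcases lt_trichotomy a k with h | h | h
    · simp [h, h.ne]; ring
    · subst h; simp; ring
    · simp [h.ne', h.not_gt]
  rw [Finset.sum_congr rfl h1, Finset.sum_add_distrib, Finset.sum_ite_eq, if_pos ha,
    ← Finset.mul_sum, sum_Icc_ite_lt]
  have h2 : ∑ p ∈ Finset.Icc (a + 1) N, x p ^ 2 = u (a + 1) ^ 2 - 1 := by rw [hsq]; ring
  have h3 := (hu a).ne'
  have h4 := (hu (a + 1)).ne'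
  have h5 := sq_eq_sq_add_succ hsq (Finset.mem_Icc.mp ha).2
  rw [h2]
  field_simp
  rw [h5]
  ring

theorem sum_rankOneFactor_mul_of_lt (hu : ∀ j, 0 < u j)
    (hsq : ∀ j, u j ^ 2 = 1 + ∑ p ∈ Finset.Icc j N, x p ^ 2) {a b : ℕ}
    (hb : b ∈ Finset.Icc 1 N) (hab : a < b) :
    ∑ k ∈ Finset.Icc 1 N, rankOneFactor x u a k * rankOneFactor x u b k +
      x a / (u a * u (a + 1)) * (x b / (u b * u (b + 1))) = 0 := by
  have h1 : ∀ k ∈ Finset.Icc 1 N, rankOneFactor x u a k * rankOneFactor x u b k =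
      (if b = k then -(x a * x b) / (u a * u (a + 1)) * (u (b + 1) / u b) else 0) +
        x a * x b / (u a * u (a + 1) * (u b * u (b + 1))) * (if b < k then x k ^ 2 else 0) := by
    intro k _
    unfold rankOneFactor
    rcases lt_trichotomy b k with h | h | h
    · simp [h, h.ne, hab.trans h, (hab.trans h).ne]; ring
    · subst h; simp [hab, hab.ne]
    · simp [h.ne', h.not_gt]
  rw [Finset.sum_congr rfl h1, Finset.sum_add_distrib, Finset.sum_ite_eq, if_pos hb,
    ← Finset.mul_sum, sum_Icc_ite_lt]
  have h2 : ∑ p ∈ Finset.Icc (b + 1) N, x p ^ 2 = u (b + 1) ^ 2 - 1 := by rw [hsq]; ring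
  have h3 := (hu a).ne'
  have h4 := (hu (a + 1)).ne'
  have h5 := (hu b).ne'
  have h6 := (hu (b + 1)).ne'
  rw [h2]
  field_simp
  ring

theorem rankOneFactor_mul_transpose_add (hu : ∀ j, 0 < u j)
    (hsq : ∀ j, u j ^ 2 = 1 + ∑ p ∈ Finset.Icc j N, x p ^ 2) :
    let V : Matrix (Fin N) (Fin N) ℝ := Matrix.of fun i j => rankOneFactor x u (i + 1) (j + 1)
    let v : Fin N → ℝ := fun i => x (i + 1)
    V * V.transpose + Matrix.vecMulVec (V.mulVec v) (V.mulVec v) = 1 := by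
  intro V v
  have hmem (i : Fin N) : (i : ℕ) + 1 ∈ Finset.Icc 1 N := by
    simp only [Finset.mem_Icc]; omega
  have hVv (i : Fin N) : V.mulVec v i = x (i + 1) / (u (i + 1) * u (i + 1 + 1)) := by
    rw [← sum_rankOneFactor_mul hu hsq (hmem i), ← Fin.sum_univ_eq_sum_Icc_one]
    rfl
  have hVV (i j : Fin N) : (V * V.transpose) i j =
      ∑ k ∈ Finset.Icc 1 N, rankOneFactor x u (i + 1) k * rankOneFactor x u (j + 1) k := by
    rw [← Fin.sum_univ_eq_sum_Icc_one N
      (fun k => rankOneFactor x u (i + 1) k * rankOneFactor x u (j + 1) k)]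
    rfl
  ext i j
  rw [Matrix.add_apply, Matrix.vecMulVec_apply, hVv, hVv, hVV]
  rcases lt_trichotomy i j with h | h | h
  · rw [Matrix.one_apply_ne h.ne]
    exact sum_rankOneFactor_mul_of_lt hu hsq (hmem j) (by simpa using h)
  · subst h
    rw [Matrix.one_apply_eq]
    exact sum_rankOneFactor_mul_self hu hsq (hmem i)
  · rw [Matrix.one_apply_ne h.ne',
      ← sum_rankOneFactor_mul_of_lt hu hsq (hmem i)
        (show (j : ℕ) + 1 < i + 1 by simpa using h)]
    simp only [mul_comm]

theorem mul_sum_mul_rankOneFactor_of_lt (hu : ∀ j, 0 < u j) {y : ℕ → ℝ} {j k : ℕ}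
    (hlow : ∀ l < j, y l = 0) (hj : 1 ≤ j) (hjk : j < k) (hk : k ≤ N) :
    u j / u (j + 1) * ∑ l ∈ Finset.Icc 1 N, y l * rankOneFactor x u l k =
      u j * u (k + 1) / (u (j + 1) * u k) * (y k - ∑ l ∈ Finset.Icc j (k - 1),
        x l * x k * (u k / (u l * u (l + 1) * u (k + 1))) * y l) := by
  have h1 : ∀ l ∈ Finset.Icc 1 N, y l * rankOneFactor x u l k =
      (if k = l then y k * (u (k + 1) / u k) else 0) +
        (if l ∈ Finset.Icc j (k - 1) then -(y l * (x l * x k)) / (u l * u (l + 1)) else 0) := by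
    intro l _
    unfold rankOneFactor
    simp only [Finset.mem_Icc]
    rcases lt_trichotomy l k with h | h | h
    · by_cases hl : l < j
      · simp [hlow l hl, h.ne']
      · rw [if_neg h.ne, if_pos h, if_neg h.ne', if_pos (by omega)]; ring
    · subst h
      rw [if_pos rfl, if_pos rfl, if_neg (by omega), add_zero]
    · rw [if_neg h.ne', if_neg h.not_gt, if_neg h.ne, if_neg (by omega)]; simp
  have hsub : Finset.Icc j (k - 1) ⊆ Finset.Icc 1 N :=
    Finset.Icc_subset_Icc hj (by omega)
  rw [Finset.sum_congr rfl h1, Finset.sum_add_distrib, Finset.sum_ite_eq,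
    if_pos (Finset.mem_Icc.mpr ⟨by omega, hk⟩), Finset.sum_ite_mem,
    Finset.inter_eq_right.mpr hsub, sub_eq_add_neg, ← Finset.sum_neg_distrib, mul_add, mul_add,
    Finset.mul_sum, Finset.mul_sum]
  have h3 := (hu j).ne'
  have h4 := (hu (j + 1)).ne'
  have h5 := (hu k).ne'
  have h6 := (hu (k + 1)).ne'
  congr 1
  · field_simp
  · refine Finset.sum_congr rfl fun l _ => ?_
    have h7 := (hu l).ne'
    have h8 := (hu (l + 1)).ne'
    field_simp

theorem mul_sum_mul_rankOneFactor_self (hu : ∀ j, 0 < u j) {y : ℕ → ℝ} {j : ℕ}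
    (hlow : ∀ l < j, y l = 0) (hdiag : y j = 1) (hj : j ∈ Finset.Icc 1 N) :
    u j / u (j + 1) * ∑ l ∈ Finset.Icc 1 N, y l * rankOneFactor x u l j = 1 := by
  rw [Finset.sum_eq_single_of_mem j hj]
  · have h3 := (hu j).ne'
    have h4 := (hu (j + 1)).ne'
    simp only [rankOneFactor, hdiag, if_true]
    field_simp
  · intro l _ hl
    rcases lt_or_gt_of_ne hl with h | h
    · simp [hlow l h]
    · simp [rankOneFactor, hl, h.not_gt]

theorem sum_mul_rankOneFactor_of_gt {y : ℕ → ℝ} {j k : ℕ}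
    (hlow : ∀ l < j, y l = 0) (hkj : k < j) :
    ∑ l ∈ Finset.Icc 1 N, y l * rankOneFactor x u l k = 0 := by
  refine Finset.sum_eq_zero fun l _ => ?_
  by_cases h : l < j
  · simp [hlow l h]
  · rw [rankOneFactor, if_neg (by omega), if_neg (by omega), mul_zero]

end RankOneFactor

/-- Appending the column `B v` to `B = diagonal r * X * V` leaves the Gram determinant of
`diagonal r * X` unchanged, provided `V (1 + v vᵀ) Vᵀ = 1`. -/
theorem det_mul_transpose_of_castSucc_last {N m : ℕ} (A : Matrix (Fin m) (Fin (N + 1)) ℝ)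
    (X : Matrix (Fin m) (Fin N) ℝ) (V : Matrix (Fin N) (Fin N) ℝ) (v : Fin N → ℝ)
    (r : Fin m → ℝ)
    (hV : V * V.transpose + Matrix.vecMulVec (V.mulVec v) (V.mulVec v) = 1)
    (hA : ∀ i k, A i (Fin.castSucc k) = r i * (X * V) i k)
    (hlast : ∀ i, A i (Fin.last N) = ∑ k, A i (Fin.castSucc k) * v k) :
    (A * A.transpose).det = (∏ i, r i ^ 2) * (X * X.transpose).det := by
  have hlast' (i) : A i (Fin.last N) = r i * (X * V).mulVec v i := by
    rw [hlast, Matrix.mulVec, dotProduct, Finset.mul_sum]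
    refine Finset.sum_congr rfl fun k _ => ?_
    rw [hA, mul_assoc]
  have hXX : X * X.transpose = (X * V) * (X * V).transpose +
      Matrix.vecMulVec ((X * V).mulVec v) ((X * V).mulVec v) := by
    calc X * X.transpose
        = X * (V * V.transpose + Matrix.vecMulVec (V.mulVec v) (V.mulVec v)) * X.transpose := by
          rw [hV, Matrix.mul_one]
      _ = _ := by
          rw [Matrix.mul_add, Matrix.add_mul, Matrix.mul_vecMulVec, Matrix.vecMulVec_mul,
            Matrix.vecMul_transpose, Matrix.mulVec_mulVec, Matrix.transpose_mul]
          simp only [Matrix.mul_assoc]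
  have hAA : A * A.transpose = Matrix.diagonal r * (X * X.transpose) * Matrix.diagonal r := by
    ext i j
    rw [Matrix.mul_diagonal, Matrix.diagonal_mul, hXX, Matrix.add_apply, Matrix.vecMulVec_apply,
      Matrix.mul_apply, Fin.sum_univ_castSucc, Matrix.mul_apply]
    simp only [Matrix.transpose_apply, hA, hlast']
    rw [mul_add, add_mul, Finset.mul_sum, Finset.sum_mul]
    congr 1
    · refine Finset.sum_congr rfl fun k _ => ?_
      ring
    · ring
  rw [hAA, Matrix.det_mul, Matrix.det_mul, Matrix.det_diagonal, Finset.prod_pow]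
  ring

/-- The key claim in the proof of Proposition 1.4 of Ishii–Stade. -/
theorem delta_minor_identity (n : ℕ) (hn : 2 ≤ n) (x : ℕ → ℝ) (x' : ℕ → ℕ → ℝ)
    (hdiag : ∀ j, 1 ≤ j → j ≤ n - 1 → x' j j = 1)
    (hlow : ∀ j k, k < j → x' j k = 0) :
    let Q : ℕ → ℝ := fun j => 1 + ∑ p ∈ Finset.Icc j (n - 1), x p ^ 2
    let Xup : ℕ → ℕ → ℝ := fun j k =>
      Real.sqrt (Q j * Q (k + 1) / (Q (j + 1) * Q k)) *
        (x' j k - ∑ ℓ ∈ Finset.Icc j (k - 1),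
          x ℓ * x k * Real.sqrt (Q k / (Q ℓ * Q (ℓ + 1) * Q (k + 1))) * x' j ℓ)
    let XE : ℕ → ℕ → ℝ := fun j k =>
      if j = k then 1
      else if k < j then 0
      else if k ≤ n - 1 then Xup j k
      else if k = n then ∑ ℓ ∈ Finset.Icc j (n - 1), (if ℓ = j then 1 else Xup j ℓ) * x ℓ
      else 0
    let xmat : Matrix (Fin n) (Fin n) ℝ := Matrix.of fun i j => XE ((i : ℕ) + 1) ((j : ℕ) + 1)
    let x'mat : Matrix (Fin (n - 1)) (Fin (n - 1)) ℝ :=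
      Matrix.of fun i j => x' ((i : ℕ) + 1) ((j : ℕ) + 1)
    ∀ m : ℕ, ∀ _h1 : 1 ≤ m, ∀ h2 : m ≤ n - 1,
      Delta n m (le_trans h2 (Nat.sub_le n 1)) xmat =
        Q 1 / Q (m + 1) * Delta (n - 1) m h2 x'mat := by
  obtain ⟨N, rfl⟩ : ∃ N, n = N + 1 := ⟨n - 1, by omega⟩
  simp only [Nat.add_sub_cancel] at hdiag
  intro Q Xup XE xmat x'mat m _ hmN
  change m ≤ N at hmN
  have hQ (j) : 0 < Q j := by positivity
  set u : ℕ → ℝ := fun j => √(Q j)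
  have hu (j) : 0 < u j := Real.sqrt_pos.mpr (hQ j)
  have hsq (j) : u j ^ 2 = 1 + ∑ p ∈ Finset.Icc j N, x p ^ 2 := Real.sq_sqrt (hQ j).le
  have hXup (j k) : Xup j k = u j * u (k + 1) / (u (j + 1) * u k) *
      (x' j k - ∑ l ∈ Finset.Icc j (k - 1),
        x l * x k * (u k / (u l * u (l + 1) * u (k + 1))) * x' j l) := by
    have hmul (a b) : √(Q a * Q b) = u a * u b := Real.sqrt_mul (hQ a).le _
    have hmul₃ (a b c) : √(Q a * Q b * Q c) = u a * u b * u c := by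
      rw [Real.sqrt_mul (mul_pos (hQ a) (hQ b)).le, hmul]
    simp only [Xup, Real.sqrt_div (hQ _).le, Real.sqrt_div (mul_pos (hQ _) (hQ _)).le, hmul,
      hmul₃]
    rfl
  have hXE (j k) (hj : j ∈ Finset.Icc 1 N) (hk : k ∈ Finset.Icc 1 N) : XE j k =
      u j / u (j + 1) * ∑ l ∈ Finset.Icc 1 N, x' j l * rankOneFactor x u l k := by
    rw [Finset.mem_Icc] at hj hk
    rcases lt_trichotomy j k with h | h | h
    · rw [mul_sum_mul_rankOneFactor_of_lt hu (hlow j) hj.1 h hk.2, ← hXup]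
      simp only [XE]
      rw [if_neg h.ne, if_neg h.not_gt, if_pos (show k ≤ N + 1 - 1 from hk.2)]
    · subst h
      rw [mul_sum_mul_rankOneFactor_self hu (hlow j) (hdiag j hj.1 hj.2) (Finset.mem_Icc.mpr hj)]
      simp [XE]
    · rw [sum_mul_rankOneFactor_of_gt (hlow j) h, mul_zero]
      simp only [XE]
      rw [if_neg h.ne', if_pos h]
  have hXE_last (j) (hj : j ∈ Finset.Icc 1 N) :
      XE j (N + 1) = ∑ k ∈ Finset.Icc 1 N, XE j k * x k := by
    rw [Finset.mem_Icc] at hj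
    have hdef : XE j (N + 1) =
        ∑ l ∈ Finset.Icc j N, (if l = j then 1 else Xup j l) * x l := by
      simp only [XE]
      rw [if_neg (by omega), if_neg (by omega), if_neg (by omega), if_pos trivial]
      rfl
    rw [hdef]
    refine Finset.sum_subset_zero_on_sdiff (Finset.Icc_subset_Icc_left hj.1) ?_ ?_
    · intro k hk
      simp only [Finset.mem_sdiff, Finset.mem_Icc] at hk
      simp only [XE]
      rw [if_neg (by omega), if_pos (by omega), zero_mul]
    · intro k hk
      rw [Finset.mem_Icc] at hk
      simp only [XE]
      by_cases h : k = j
      · rw [if_pos h, if_pos h.symm]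
      · rw [if_neg h, if_neg (Ne.symm h), if_neg (by omega), if_pos (by omega)]
  have hmem {M : ℕ} (hM : M ≤ N) (i : Fin M) : (i : ℕ) + 1 ∈ Finset.Icc 1 N := by
    simp only [Finset.mem_Icc]; omega
  have hgram := det_mul_transpose_of_castSucc_last
    (xmat.submatrix (Fin.castLE (hmN.trans N.le_succ)) id)
    (x'mat.submatrix (Fin.castLE hmN) id) _ (fun k => x (k + 1))
    (fun i => u (i + 1) / u (i + 1 + 1)) (rankOneFactor_mul_transpose_add hu hsq) (by
      intro i k
      refine (hXE (i + 1) (k + 1) (hmem hmN i) (hmem le_rfl k)).trans ?_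
      rw [← Fin.sum_univ_eq_sum_Icc_one]
      rfl) (by
      intro i
      refine (hXE_last (i + 1) (hmem hmN i)).trans ?_
      rw [← Fin.sum_univ_eq_sum_Icc_one]
      rfl)
  have hprod : ∏ i : Fin m, (u (i + 1) / u (i + 1 + 1)) ^ 2 = Q 1 / Q (m + 1) := by
    have hterm (i : ℕ) : (u (i + 1) / u (i + 1 + 1)) ^ 2 = Q (i + 1) / Q (i + 1 + 1) := by
      rw [div_pow]
      exact congrArg₂ _ (Real.sq_sqrt (hQ _).le) (Real.sq_sqrt (hQ _).le)
    simp only [hterm]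
    rw [Fin.prod_univ_eq_prod_range (fun i => Q (i + 1) / Q (i + 1 + 1)) m]
    refine Finset.prod_range_induction _ (fun i => Q 1 / Q (i + 1)) (div_self (hQ _).ne') m
      fun i _ => ?_
    have hne := (hQ (i + 1)).ne'
    field_simp
  rw [Delta_eq_det_mul_transpose, Delta_eq_det_mul_transpose, ← hprod]
  exact hgram

end
end

section
/- Let n ≥ 2 and a = (a_1,…,a_n) ∈ ℂ^n with each a_j purely imaginary, and let s_1,…,s_{n−1} ∈ ℂ with Re(s_j) > 0 for all j. Then U_{n,a}(s_{n−1}−|a|, s_{n−2}−|a|, …, s_1−|a|) = U_{n,−a}(s_1,…,s_{n−1}), where −a := (−a_1,…,−a_n). -/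
open MeasureTheory Complex

noncomputable section

lemma extR_of_lt {k : ℕ} (t : Fin k → ℝ) {i : ℕ} (h : i < k) : extR t i = t ⟨i, h⟩ := by
  simp [extR, h]

lemma extR_pos {k : ℕ} {t : Fin k → ℝ} (ht : t ∈ posSet k) (i : ℕ) : 0 < extR t i := by
  unfold extR
  split_ifs with h
  · exact ht _
  · exact one_pos

lemma extR_comp_rev {k : ℕ} (t : Fin k → ℝ) {i : ℕ} (h : i < k) :
    extR (t ∘ Fin.rev) i = extR t (k - 1 - i) := by
  rw [extR_of_lt _ h, extR_of_lt _ (by omega : k - 1 - i < k), Function.comp_apply]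
  congr 1
  ext
  simp only [Fin.val_rev]
  omega

lemma measurableSet_posSet (k : ℕ) : MeasurableSet (posSet k) := by
  have h : posSet k = Set.univ.pi fun _ => Set.Ioi (0 : ℝ) := by
    ext t
    simp [posSet]
  rw [h]
  exact MeasurableSet.univ_pi fun _ => measurableSet_Ioi

/-- Integrals over the positive orthant are invariant under reversing the coordinates. -/
lemma setIntegral_posSet_comp_rev (k : ℕ) (F : (Fin k → ℝ) → ℂ) :
    ∫ t in posSet k, F (t ∘ Fin.rev) = ∫ t in posSet k, F t := by
  have hmp := volume_measurePreserving_piCongrLeft (fun _ : Fin k => ℝ) Fin.revPerm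
  have hfun : ∀ t : Fin k → ℝ,
      MeasurableEquiv.piCongrLeft (fun _ : Fin k => ℝ) Fin.revPerm t = t ∘ Fin.rev := by
    intro t
    ext i
    have h := MeasurableEquiv.piCongrLeft_apply_apply (β := fun _ : Fin k => ℝ)
      Fin.revPerm t (Fin.rev i)
    simpa using h
  have h := hmp.setIntegral_preimage_emb (MeasurableEquiv.measurableEmbedding _) F (posSet k)
  have hpre : (MeasurableEquiv.piCongrLeft (fun _ : Fin k => ℝ) Fin.revPerm) ⁻¹' posSet k
      = posSet k := by
    ext t
    simp only [Set.mem_preimage, hfun, posSet, Set.mem_ofPred_eq, Function.comp_apply]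
    exact ⟨fun h j => by simpa using h j.rev, fun h j => h _⟩
  rw [hpre] at h
  simpa only [hfun] using h

/-- The measure `∏ dt_j / t_j` on the positive orthant is invariant under `t_j ↦ (c_j t_j)⁻¹`. -/
lemma setIntegral_posSet_inv (k : ℕ) (c : Fin k → ℝ) (hc : ∀ j, 0 < c j)
    (F : (Fin k → ℝ) → ℂ) :
    ∫ t in posSet k, F t * (∏ j, (t j : ℂ))⁻¹ =
      ∫ v in posSet k, F (fun j => (c j * v j)⁻¹) * (∏ j, (v j : ℂ))⁻¹ := by
  set φ : (Fin k → ℝ) → (Fin k → ℝ) := fun v j => (c j * v j)⁻¹ with hφ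
  let D : (Fin k → ℝ) → (Fin k → ℝ) →L[ℝ] (Fin k → ℝ) := fun v =>
    ContinuousLinearMap.pi fun j =>
      (-(c j * v j ^ 2)⁻¹) • ContinuousLinearMap.proj (R := ℝ) (φ := fun _ : Fin k => ℝ) j
  have hinv : ∀ v ∈ posSet k, φ (φ v) = v := by
    intro v hv
    ext j
    have h1 := (hc j).ne'
    have h2 := (hv j).ne'
    simp only [hφ]
    field_simp
  have hmaps : ∀ v ∈ posSet k, φ v ∈ posSet k := fun v hv j =>
    inv_pos.mpr (mul_pos (hc j) (hv j))
  have himg : φ '' posSet k = posSet k := by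
    apply Set.Subset.antisymm
    · rintro _ ⟨v, hv, rfl⟩
      exact hmaps v hv
    · exact fun v hv => ⟨φ v, hmaps v hv, hinv v hv⟩
  have hinj : Set.InjOn φ (posSet k) := by
    intro v hv w hw h
    rw [← hinv v hv, ← hinv w hw, h]
  have hderiv : ∀ v ∈ posSet k, HasFDerivWithinAt φ (D v) (posSet k) v := by
    intro v hv
    apply HasFDerivAt.hasFDerivWithinAt
    rw [hasFDerivAt_pi']
    intro j
    have h1 := (hc j).ne'
    have h2 := (hv j).ne'
    have hd : HasDerivAt (fun x : ℝ => (c j * x)⁻¹) (-(c j * v j ^ 2)⁻¹) (v j) := by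
      have h := ((hasDerivAt_id (v j)).const_mul (c j)).inv (mul_ne_zero h1 h2)
      refine h.congr_deriv ?_
      simp only [id]
      field_simp
    have hp : HasFDerivAt (fun w : Fin k → ℝ => w j)
        (ContinuousLinearMap.proj (R := ℝ) (φ := fun _ : Fin k => ℝ) j) v :=
      hasFDerivAt_apply j v
    exact HasDerivAt.comp_hasFDerivAt (f := fun w : Fin k → ℝ => w j) v hd hp
  have hdet : ∀ v, (D v).det = ∏ j, (-(c j * v j ^ 2)⁻¹) := by
    intro v
    have h : ((D v : (Fin k → ℝ) →L[ℝ] (Fin k → ℝ)) : (Fin k → ℝ) →ₗ[ℝ] (Fin k → ℝ)) =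
        Matrix.toLin' (Matrix.diagonal fun j => -(c j * v j ^ 2)⁻¹) := by
      ext w j
      simp [D, Matrix.toLin'_apply, Matrix.mulVec_diagonal]
    rw [ContinuousLinearMap.det, h, LinearMap.det_toLin', Matrix.det_diagonal]
  have key := integral_image_eq_integral_abs_det_fderiv_smul volume
    (measurableSet_posSet k) hderiv hinj (fun t => F t * (∏ j, (t j : ℂ))⁻¹)
  rw [himg] at key
  rw [key]
  refine setIntegral_congr_fun (measurableSet_posSet k) fun v hv => ?_
  have hprod : ((|(D v).det| : ℝ) : ℂ) * (∏ j, ((φ v j : ℝ) : ℂ))⁻¹ = (∏ j, (v j : ℂ))⁻¹ := by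
    rw [hdet, Finset.abs_prod, Complex.ofReal_prod, ← Finset.prod_inv_distrib,
      ← Finset.prod_inv_distrib, ← Finset.prod_mul_distrib]
    refine Finset.prod_congr rfl fun j _ => ?_
    have h1 := hc j
    have h2 : 0 < v j := hv j
    rw [abs_neg, abs_of_pos (by positivity)]
    simp only [hφ]
    push_cast
    have h3 : (c j : ℂ) ≠ 0 := by exact_mod_cast h1.ne'
    have h4 : (v j : ℂ) ≠ 0 := by exact_mod_cast h2.ne'
    field_simp
  simp only [Complex.real_smul]
  rw [← hprod]
  ring

lemma BesselK_neg (ν : ℂ) (y : ℝ) : BesselK (-ν) y = BesselK ν y := by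
  unfold BesselK
  congr 1
  rw [← integral_comp_rpow_Ioi _ (show (-1 : ℝ) ≠ 0 by norm_num)]
  refine setIntegral_congr_fun measurableSet_Ioi fun t ht => ?_
  have ht : 0 < t := ht
  have h0 : (t : ℂ) ≠ 0 := by exact_mod_cast ht.ne'
  have h1 : t ^ (-1 - 1 : ℝ) = (t ^ 2)⁻¹ := by
    rw [show (-1 - 1 : ℝ) = -((2 : ℕ) : ℝ) by norm_num, Real.rpow_neg ht.le, Real.rpow_natCast]
  have h2 : (t : ℂ)⁻¹ ^ (-ν) = (t : ℂ) ^ ν := by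
    rw [Complex.inv_cpow _ _ (by rw [Complex.arg_ofReal_of_nonneg ht.le]; exact Real.pi_pos.ne),
      Complex.cpow_neg, inv_inv]
  simp only [Real.rpow_neg_one, h1, abs_neg, abs_one, one_mul, Complex.real_smul]
  push_cast
  rw [h2, add_comm ((t : ℂ)⁻¹)]
  simp only [one_div, inv_inv]
  field_simp

lemma tildeA_neg (n : ℕ) (a : ℕ → ℂ) :
    tildeA n (fun j => -a j) = fun j => -tildeA n a j := by
  funext j
  simp only [tildeA]
  ring

lemma sumA_neg (n : ℕ) (a : ℕ → ℂ) : sumA n (fun j => -a j) = -sumA n a := by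
  simp [sumA]

lemma sumA_tildeA (n : ℕ) (a : ℕ → ℂ) :
    sumA (n + 1) (tildeA (n + 2) a) = sumA (n + 2) a := by
  have h : ((n : ℂ) + 1) ≠ 0 := by exact_mod_cast n.succ_ne_zero
  simp only [sumA, tildeA, Finset.sum_add_distrib, Finset.sum_const, Finset.card_range,
    nsmul_eq_mul]
  rw [Finset.sum_range_succ' _ (n + 1)]
  push_cast
  rw [show (n : ℂ) + 2 - 1 = n + 1 by ring]
  field_simp

/-- `WhittAr n a` only depends on the first `n - 1` arguments. -/
lemma WhittAr_congr (m : ℕ) (a : ℕ → ℂ) {y z : ℕ → ℝ} (h : ∀ j < m + 1, y j = z j) :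
    WhittAr (m + 2) a y = WhittAr (m + 2) a z := by
  induction m generalizing a y z with
  | zero => simp only [WhittAr, h 0 (by omega)]
  | succ m ih =>
    simp only [WhittAr]
    congr 1
    funext t
    congr 3
    · exact ih _ fun j hj => by rw [h (j + 1) (by omega)]
    · exact Finset.prod_congr rfl fun j hj => by rw [h j (Finset.mem_range.mp hj)]

lemma ofReal_cpow_eq_exp {x : ℝ} (hx : 0 < x) (z : ℂ) :
    (x : ℂ) ^ z = Complex.exp ((Real.log x : ℂ) * z) := by
  rw [Complex.cpow_def_of_ne_zero (by exact_mod_cast hx.ne'), Complex.ofReal_log hx.le]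

lemma prod_range_mul_sqrt_div (m : ℕ) (y V : ℕ → ℝ) (hV : ∀ j, 0 < V j) :
    ∏ j ∈ Finset.range m, (y j * Real.sqrt (V j / V (j + 1))) =
      (∏ j ∈ Finset.range m, y j) * Real.sqrt (V 0 / V m) := by
  rw [Finset.prod_mul_distrib]
  congr 1
  induction m with
  | zero => simp [(hV 0).ne']
  | succ m ih =>
    rw [Finset.prod_range_succ, ih, ← Real.sqrt_mul (div_pos (hV _) (hV _)).le]
    congr 1
    have := (hV m).ne'
    field_simp

lemma mul_sqrt_inv_div_inv {y z v w : ℝ} (hy : 0 < y) (hz : 0 < z) (hv : 0 < v) (hw : 0 < w) :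
    z * Real.sqrt ((((Real.pi * z) ^ 2 * w)⁻¹) / (((Real.pi * y) ^ 2 * v)⁻¹)) =
      y * Real.sqrt (v / w) := by
  have hpi := Real.pi_pos
  have h : ((((Real.pi * z) ^ 2 * w)⁻¹) / (((Real.pi * y) ^ 2 * v)⁻¹)) =
      (y / z) ^ 2 * (v / w) := by
    field_simp
  rw [h, Real.sqrt_mul (sq_nonneg _), Real.sqrt_sq (by positivity)]
  field_simp

/-- The change of variables `t = ((π y)² v)⁻¹` in a single factor of the recursion. -/
lemma kernel_factor_inv {y v : ℝ} (hy : 0 < y) (hv : 0 < v) {p q r d α : ℂ}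
    (hd : d ≠ 0) (hpqr : p + q = r) :
    Complex.exp (((-(Real.pi * y) ^ 2 * ((Real.pi * y) ^ 2 * v)⁻¹ -
          1 / ((Real.pi * y) ^ 2 * v)⁻¹ : ℝ) : ℂ)) *
        ((Real.pi * y : ℝ) : ℂ) ^ (p * -α / d) *
        ((((Real.pi * y) ^ 2 * v)⁻¹ : ℝ) : ℂ) ^ (r * -α / (2 * d)) =
      Complex.exp (((-(Real.pi * y) ^ 2 * v - 1 / v : ℝ) : ℂ)) *
        ((Real.pi * y : ℝ) : ℂ) ^ (q * α / d) *
        (v : ℂ) ^ (r * α / (2 * d)) := by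
  have hpi := Real.pi_pos
  have hpy : 0 < Real.pi * y := by positivity
  have h1 : -(Real.pi * y) ^ 2 * ((Real.pi * y) ^ 2 * v)⁻¹ - 1 / ((Real.pi * y) ^ 2 * v)⁻¹ =
      -(Real.pi * y) ^ 2 * v - 1 / v := by
    field_simp
    ring
  rw [h1, mul_assoc, mul_assoc]
  congr 1
  rw [ofReal_cpow_eq_exp hpy, ofReal_cpow_eq_exp hpy,
    ofReal_cpow_eq_exp hv, ofReal_cpow_eq_exp (by positivity), ← Complex.exp_add,
    ← Complex.exp_add, Real.log_inv, Real.log_mul (by positivity) hv.ne', Real.log_pow]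
  congr 1
  push_cast
  rw [← hpqr]
  field_simp
  ring

/-- The boundary factors of the recursion under the change of variables. -/
lemma boundary_factor_inv {P y v w : ℝ} (hP : 0 < P) (hy : 0 < y) (hv : 0 < v) (hw : 0 < w)
    (S : ℂ) :
    ((P * Real.sqrt (v / w) : ℝ) : ℂ) ^ (-S) *
        ((Real.pi * ((Real.pi * y) ^ 2 * w)⁻¹ : ℝ) : ℂ) ^ (- -S / 2) =
      ((P * y : ℝ) : ℂ) ^ (-S) * ((Real.pi * v : ℝ) : ℂ) ^ (-S / 2) := by
  have hpi := Real.pi_pos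
  have hs : 0 < Real.sqrt (v / w) := Real.sqrt_pos.mpr (by positivity)
  rw [ofReal_cpow_eq_exp (by positivity), ofReal_cpow_eq_exp (by positivity),
    ofReal_cpow_eq_exp (by positivity), ofReal_cpow_eq_exp (by positivity),
    ← Complex.exp_add, ← Complex.exp_add, Real.log_mul hP.ne' hs.ne',
    Real.log_sqrt (by positivity), Real.log_div hv.ne' hw.ne',
    Real.log_mul hpi.ne' (by positivity), Real.log_inv, Real.log_mul (by positivity) hw.ne',
    Real.log_pow, Real.log_mul hpi.ne' hy.ne', Real.log_mul hP.ne' hy.ne',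
    Real.log_mul hpi.ne' hv.ne']
  congr 1
  push_cast
  ring

lemma ofReal_prod_cpow (m : ℕ) (y : ℕ → ℝ) (hy : ∀ j, 0 < y j) (z : ℂ) :
    ((∏ j ∈ Finset.range m, y j : ℝ) : ℂ) ^ z = ∏ j ∈ Finset.range m, (y j : ℂ) ^ z := by
  induction m with
  | zero => simp
  | succ m ih =>
    rw [Finset.prod_range_succ, Finset.prod_range_succ, ← ih, Complex.ofReal_mul,
      Complex.mul_cpow_ofReal_nonneg (Finset.prod_pos fun j _ => hy j).le (hy m).le]

/-- The pointwise contragredient symmetry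
`Ŵ_{n,-a}(y_1,…,y_{n-1}) = (y_1⋯y_{n-1})^{-|a|} Ŵ_{n,a}(y_{n-1},…,y_1)`. -/
lemma WhittAr_neg (m : ℕ) (a : ℕ → ℂ) (y : ℕ → ℝ) (hy : ∀ j, 0 < y j) :
    WhittAr (m + 2) (fun j => -a j) y =
      ((∏ j ∈ Finset.range (m + 1), y j : ℝ) : ℂ) ^ (-sumA (m + 2) a) *
        WhittAr (m + 2) a (fun j => y (m - j)) := by
  induction m generalizing a y with
  | zero =>
    have h0 : (y 0 : ℂ) ≠ 0 := by exact_mod_cast (hy 0).ne'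
    simp only [zero_add, WhittAr, Finset.prod_range_one, sumA, Finset.sum_range_succ,
      Finset.sum_range_zero]
    rw [show (-a 0 - -a 1) / 2 = -((a 0 - a 1) / 2) by ring, BesselK_neg,
      show (-a 0 + -a 1) / 2 = -(a 0 + a 1) + (a 0 + a 1) / 2 by ring,
      Complex.cpow_add _ _ h0]
    ring
  | succ m ih =>
    have hpi := Real.pi_pos
    have hc : ∀ j : Fin (m + 2), 0 < (Real.pi * y j) ^ 2 := fun j => by
      have := hy j
      positivity
    have hd : (((m + 2 : ℕ) : ℂ)) ≠ 0 := by exact_mod_cast (by omega : m + 2 ≠ 0)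
    have hext : ∀ t : Fin (m + 2) → ℝ,
        ∏ j ∈ Finset.range (m + 2), ((extR t j : ℝ) : ℂ) = ∏ j, (t j : ℂ) := by
      intro t
      rw [Finset.prod_range]
      exact Finset.prod_congr rfl fun j _ => by rw [extR_of_lt t j.2]
    simp only [WhittAr, hext]
    rw [setIntegral_posSet_inv (m + 2) _ hc, ← integral_const_mul]
    refine Eq.trans ?_ (setIntegral_posSet_comp_rev _ _)
    refine setIntegral_congr_fun (measurableSet_posSet _) fun u hu => ?_
    have hV : ∀ j, 0 < extR u j := extR_pos hu
    have hT : ∀ j < m + 2, extR (fun j : Fin (m + 2) => ((Real.pi * y j) ^ 2 * u j)⁻¹) j =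
        ((Real.pi * y j) ^ 2 * extR u j)⁻¹ := fun j hj => by
      rw [extR_of_lt _ hj, extR_of_lt _ hj]
    have hR : ∀ j < m + 2, extR (u ∘ Fin.rev) j = extR u (m + 1 - j) := fun j hj => by
      rw [extR_comp_rev u hj]
      congr 1
    have hx : ∀ j, 0 < y j * Real.sqrt (extR u j / extR u (j + 1)) := fun j =>
      mul_pos (hy j) (Real.sqrt_pos.mpr (div_pos (hV _) (hV _)))
    have hW : WhittAr (m + 2) (tildeA (m + 3) fun j => -a j)
          (fun j => y (j + 1) *
            Real.sqrt (extR (fun j : Fin (m + 2) => ((Real.pi * y j) ^ 2 * u j)⁻¹) (j + 1) /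
              extR (fun j : Fin (m + 2) => ((Real.pi * y j) ^ 2 * u j)⁻¹) j)) =
        (((∏ j ∈ Finset.range (m + 1), y j) * Real.sqrt (extR u 0 / extR u (m + 1)) : ℝ) : ℂ) ^
            (-sumA (m + 3) a) *
          WhittAr (m + 2) (tildeA (m + 3) a) (fun j => y (m + 1 - (j + 1)) *
            Real.sqrt (extR (u ∘ Fin.rev) (j + 1) / extR (u ∘ Fin.rev) j)) := by
      rw [tildeA_neg, WhittAr_congr m _
        (z := fun j => y j * Real.sqrt (extR u j / extR u (j + 1))), ih _ _ hx,
        prod_range_mul_sqrt_div _ _ _ hV, sumA_tildeA (m + 1)]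
      · congr 1
        refine WhittAr_congr m _ fun j hj => ?_
        rw [hR j (by omega), hR (j + 1) (by omega)]
        rw [show m + 1 - (j + 1) = m - j by omega, show m + 1 - j = m - j + 1 by omega]
      · intro j hj
        rw [hT j (by omega), hT (j + 1) (by omega),
          mul_sqrt_inv_div_inv (hy j) (hy _) (hV _) (hV _)]
    have hE : ∏ j ∈ Finset.range (m + 2),
        (Complex.exp (((-(Real.pi * y j) ^ 2 *
              extR (fun j : Fin (m + 2) => ((Real.pi * y j) ^ 2 * u j)⁻¹) j -
              1 / extR (fun j : Fin (m + 2) => ((Real.pi * y j) ^ 2 * u j)⁻¹) j : ℝ) : ℂ)) *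
          ((Real.pi * y j : ℝ) : ℂ) ^ ((((m + 2 - j : ℕ) : ℂ) * -a 0) / ((m + 2 : ℕ) : ℂ)) *
          ((extR (fun j : Fin (m + 2) => ((Real.pi * y j) ^ 2 * u j)⁻¹) j : ℝ) : ℂ) ^
            ((((m + 3 : ℕ) : ℂ) * -a 0) / (2 * ((m + 2 : ℕ) : ℂ)))) =
        ∏ j ∈ Finset.range (m + 2),
        (Complex.exp (((-(Real.pi * y (m + 1 - j)) ^ 2 * extR (u ∘ Fin.rev) j -
              1 / extR (u ∘ Fin.rev) j : ℝ) : ℂ)) *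
          ((Real.pi * y (m + 1 - j) : ℝ) : ℂ) ^
            ((((m + 2 - j : ℕ) : ℂ) * a 0) / ((m + 2 : ℕ) : ℂ)) *
          ((extR (u ∘ Fin.rev) j : ℝ) : ℂ) ^
            ((((m + 3 : ℕ) : ℂ) * a 0) / (2 * ((m + 2 : ℕ) : ℂ)))) := by
      rw [← Finset.prod_range_reflect]
      refine Finset.prod_congr rfl fun j hj => ?_
      have hj := Finset.mem_range.mp hj
      rw [hR j hj, show m + 2 - 1 - j = m + 1 - j by omega, hT (m + 1 - j) (by omega)]
      refine kernel_factor_inv (hy _) (hV _) hd ?_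
      rw [← Nat.cast_add]
      congr 1
      omega
    have hrev : ∏ j, (((u ∘ Fin.rev) j : ℝ) : ℂ) = ∏ j, (u j : ℂ) :=
      Equiv.prod_comp Fin.revPerm fun j => (u j : ℂ)
    have hcomm : ∀ A W E B D : ℂ, A * W * E * B * D = A * B * (W * E * D) := by
      intros
      ring
    have hB := boundary_factor_inv (Finset.prod_pos fun j (_ : j ∈ Finset.range (m + 1)) => hy j)
      (hy (m + 1)) (hV 0) (hV (m + 1)) (sumA (m + 3) a)
    simp only [hW, hE, hrev, sumA_neg, hT (m + 1) (by omega), hR (m + 1) (by omega), Nat.sub_self]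
    rw [← Finset.prod_range_succ] at hB
    rw [hcomm, hB]
    ring

/-- Contragredient symmetry of the Mellin transform of the `GL(n,ℝ)` class one
Whittaker function (part of Corollary 1.6 of Ishii–Stade). -/
theorem U_contragredient (n : ℕ) (hn : 2 ≤ n) (a : ℕ → ℂ)
    (ha : ∀ j < n, (a j).re = 0) (s : ℕ → ℂ) (hs : ∀ j < n - 1, 0 < (s j).re) :
    Ufun n a (fun j => s (n - 2 - j) - sumA n a) = Ufun n (fun j => -a j) s := by
  obtain ⟨m, rfl⟩ : ∃ m, n = m + 2 := ⟨n - 2, by omega⟩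
  unfold Ufun
  rw [← setIntegral_posSet_comp_rev]
  refine setIntegral_congr_fun (measurableSet_posSet _) fun y hy => ?_
  have hpos : ∀ j, 0 < extR y j := extR_pos hy
  simp only [show m + 2 - 1 = m + 1 by omega] at hy ⊢
  rw [WhittAr_neg m a _ hpos]
  have hR : ∀ j < m + 1, extR (y ∘ Fin.rev) j = extR y (m - j) := fun j hj => by
    rw [extR_comp_rev y (by omega)]
    rfl
  have hprod : ∏ j ∈ Finset.range (m + 1), ((extR (y ∘ Fin.rev) j : ℝ) : ℂ) ^
        (s (m + 2 - 2 - j) - sumA (m + 2) a) / ((extR (y ∘ Fin.rev) j : ℝ) : ℂ) =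
      ((∏ j ∈ Finset.range (m + 1), extR y j : ℝ) : ℂ) ^ (-sumA (m + 2) a) *
        ∏ j ∈ Finset.range (m + 1), ((extR y j : ℝ) : ℂ) ^ s j / ((extR y j : ℝ) : ℂ) := by
    rw [ofReal_prod_cpow _ _ hpos, ← Finset.prod_mul_distrib,
      ← Finset.prod_range_reflect (fun j => ((extR y j : ℝ) : ℂ) ^ (-sumA (m + 2) a) * _)]
    refine Finset.prod_congr rfl fun j hj => ?_
    have h0 : ((extR y (m - j) : ℝ) : ℂ) ≠ 0 := by exact_mod_cast (hpos _).ne'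
    rw [hR j (Finset.mem_range.mp hj), show m + 2 - 2 - j = m - j by omega,
      show m + 1 - 1 - j = m - j by omega, sub_eq_add_neg, Complex.cpow_add _ _ h0]
    ring
  rw [hprod, WhittAr_congr m a hR]
  ring

end
end

section
/- Let n ≥ 3 and a = (a_1,…,a_n) ∈ ℂ^n with each a_j purely imaginary, and let s_1,…,s_{n−1} ∈ ℂ with Re(s_j) > 0 for all j. Then U_{n,a}(s_1,…,s_{n−1}) = (2^{−1}/(4πi)^{n−2})·∫_{z_1,…,z_{n−2}} U_{n−1,ã}(z_1,…,z_{n−2})·∏_{j=1}^{n−1} Γ_ℝ(s_j−z_j−j·a_1/(n−1))·Γ_ℝ(s_j−z_{j−1}+(n−j)·a_1/(n−1)) dz_1⋯dz_{n−2}, where z_0 := 0 and z_{n−1} := −|a|. Moreover, for purely imaginary a_1, a_2 and Re(s) > 0, U_{2,(a_1,a_2)}(s) = (1/2)·Γ_ℝ(s+a_1)·Γ_ℝ(s+a_2). -/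
open MeasureTheory Complex

noncomputable section

/-- The extension of the integration variables `z_1,…,z_{n-2}` by the
conventions `z_0 = 0`, `z_{n-1} = -|a|` (1-based indexing). -/
def Zext (n : ℕ) (a : ℕ → ℂ) (z : ℕ → ℂ) : ℕ → ℂ :=
  fun i => if i = 0 then 0 else if i ≤ n - 2 then z (i - 1) else -sumA n a

theorem norm_Gamma_le_of_re_pos {s : ℂ} (hs : 0 < s.re) : ‖Gamma s‖ ≤ Real.Gamma s.re := by
  rw [Complex.Gamma_eq_integral hs, Real.Gamma_eq_integral hs, GammaIntegral]
  refine (norm_integral_le_integral_norm _).trans_eq ?_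
  refine setIntegral_congr_fun measurableSet_Ioi fun x hx => ?_
  have hx : 0 < x := hx
  simp only [norm_mul, norm_real, Real.norm_eq_abs, Real.abs_exp]
  rw [norm_cpow_eq_rpow_re_of_pos hx]
  simp

theorem integrable_Gamma_vertical {b : ℝ} (hb : 0 < b) :
    Integrable fun t : ℝ => Gamma (b + t * I) := by
  have hc : Continuous fun t : ℝ => Gamma (b + t * I) := by
    refine continuous_iff_continuousAt.2 fun t => ?_
    have hd : DifferentiableAt ℂ Gamma ((b : ℂ) + t * I) := by
      refine differentiableAt_Gamma _ fun m h => ?_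
      have := congrArg Complex.re h
      simp at this
      linarith [(Nat.cast_nonneg m : (0 : ℝ) ≤ m)]
    exact ContinuousAt.comp (f := fun t : ℝ => (b : ℂ) + t * I) hd.continuousAt (by fun_prop)
  refine Integrable.mono' (g := fun t : ℝ =>
    (Real.Gamma (b + 2) * (1 + 1 / b ^ 2)) * (1 + t ^ 2)⁻¹)
    (integrable_inv_one_add_sq.const_mul _) hc.aestronglyMeasurable (.of_forall fun t => ?_)
  have h0 : (b : ℂ) + t * I ≠ 0 := fun h => by
    have := congrArg Complex.re h
    simp at this
    linarith
  have h1 : (b : ℂ) + t * I + 1 ≠ 0 := fun h => by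
    have := congrArg Complex.re h
    simp at this
    linarith
  have e : Gamma ((b : ℂ) + t * I + 1 + 1) =
      ((b : ℂ) + t * I + 1) * (((b : ℂ) + t * I) * Gamma ((b : ℂ) + t * I)) := by
    rw [Gamma_add_one _ h1, Gamma_add_one _ h0]
  have hG := norm_Gamma_le_of_re_pos (s := (b : ℂ) + t * I + 1 + 1) (by simp; linarith)
  have hre : ((b : ℂ) + t * I + 1 + 1).re = b + 2 := by simp; ring
  rw [hre, e, norm_mul, norm_mul] at hG
  have n0 : b ^ 2 + t ^ 2 = ‖(b : ℂ) + t * I‖ ^ 2 := by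
    rw [Complex.sq_norm, Complex.normSq_apply]; simp; ring
  have n1 : ‖(b : ℂ) + t * I‖ ≤ ‖(b : ℂ) + t * I + 1‖ := by
    refine abs_le_of_sq_le_sq' ?_ (norm_nonneg _) |>.2
    rw [Complex.sq_norm, Complex.normSq_apply, Complex.sq_norm, Complex.normSq_apply]
    simp; nlinarith
  set N := ‖(b : ℂ) + t * I‖
  have hN : 0 ≤ N := norm_nonneg _
  have key : (b ^ 2 + t ^ 2) * ‖Gamma (b + t * I)‖ ≤ Real.Gamma (b + 2) := by
    refine le_trans ?_ hG
    rw [n0, ← mul_assoc, sq]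
    gcongr
  have hpos : 0 < b ^ 2 + t ^ 2 := by positivity
  have hGp : 0 ≤ Real.Gamma (b + 2) := (Real.Gamma_pos_of_pos (by linarith)).le
  rw [← div_eq_mul_inv, le_div_iff₀ (by positivity)]
  have h2 : ‖Gamma (b + t * I)‖ ≤ Real.Gamma (b + 2) / (b ^ 2 + t ^ 2) := by
    rw [le_div_iff₀ hpos]; linarith
  calc ‖Gamma (b + t * I)‖ * (1 + t ^ 2)
      ≤ Real.Gamma (b + 2) / (b ^ 2 + t ^ 2) * (1 + t ^ 2) := by gcongr
    _ = Real.Gamma (b + 2) * ((1 + t ^ 2) / (b ^ 2 + t ^ 2)) := by ring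
    _ ≤ _ := by
      refine mul_le_mul_of_nonneg_left ?_ hGp
      rw [div_le_iff₀ hpos]
      have : (1 + 1 / b ^ 2) * (b ^ 2 + t ^ 2) = 1 + t ^ 2 + (b ^ 2 + t ^ 2 / b ^ 2) := by
        field_simp; ring
      rw [this]
      have : 0 ≤ b ^ 2 + t ^ 2 / b ^ 2 := by positivity
      linarith

theorem integral_cpow_mul_Gamma_vertical {b x : ℝ} (hb : 0 < b) (hx : 0 < x) :
    ∫ t : ℝ, (x : ℂ) ^ (-(b + t * I)) * Gamma (b + t * I) = 2 * Real.pi * Real.exp (-x) := by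
  have hm : ∀ t : ℝ, mellin (fun x => ((Real.exp (-x) : ℝ) : ℂ)) (b + t * I) =
      Gamma (b + t * I) := fun t => by
    rw [← GammaIntegral_eq_mellin, Complex.Gamma_eq_integral (by simpa using hb)]
  have := mellinInv_mellin_eq b (fun x => ((Real.exp (-x) : ℝ) : ℂ)) hx
    (by
      have := Complex.GammaIntegral_convergent (s := b) (by simpa using hb)
      simpa [MellinConvergent, mul_comm] using this)
    (by
      unfold VerticalIntegrable
      simp_rw [hm]
      exact integrable_Gamma_vertical hb)
    (by fun_prop)
  simp only [mellinInv, hm, smul_eq_mul] at this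
  have hp : (2 * (Real.pi : ℂ)) ≠ 0 := by simp [Real.pi_ne_zero]
  rw [← this, real_smul]
  push_cast
  rw [← mul_assoc, mul_one_div_cancel hp, one_mul]

theorem image_exp_univ : Real.exp '' Set.univ = Set.Ioi 0 := by
  rw [Set.image_univ, Real.range_exp]

theorem integral_Ioi_eq_integral_exp (f : ℝ → ℂ) :
    ∫ t in Set.Ioi (0 : ℝ), f t = ∫ x : ℝ, (Real.exp x : ℂ) * f (Real.exp x) := by
  rw [← image_exp_univ, integral_image_eq_integral_abs_deriv_smul MeasurableSet.univ
    (fun x _ => (Real.hasDerivAt_exp x).hasDerivWithinAt) Real.exp_injective.injOn]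
  simp [Real.abs_exp]

theorem integrableOn_Ioi_iff_integrable_exp (f : ℝ → ℂ) :
    IntegrableOn f (Set.Ioi (0 : ℝ)) ↔
      Integrable fun x : ℝ => (Real.exp x : ℂ) * f (Real.exp x) := by
  rw [← image_exp_univ, integrableOn_image_iff_integrableOn_abs_deriv_smul MeasurableSet.univ
    (fun x _ => (Real.hasDerivAt_exp x).hasDerivWithinAt) Real.exp_injective.injOn]
  simp [Real.abs_exp]

theorem ofReal_exp_cpow (x : ℝ) (s : ℂ) : ((Real.exp x : ℝ) : ℂ) ^ s = cexp (x * s) := by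
  rw [cpow_def_of_ne_zero (by simp), ← ofReal_log (Real.exp_pos x).le, Real.log_exp]

theorem exp_mul_gamma_integrand (s : ℂ) (x : ℝ) :
    (Real.exp x : ℂ) * ((Real.exp (-Real.exp x) : ℝ) * ((Real.exp x : ℝ) : ℂ) ^ (s - 1)) =
      cexp (s * x - Real.exp x) := by
  rw [ofReal_exp_cpow, ofReal_exp x, ofReal_exp (-_), ← Complex.exp_add, ← Complex.exp_add]
  congr 1
  push_cast
  ring

theorem integrable_cexp_sub_exp {s : ℂ} (hs : 0 < s.re) :
    Integrable fun x : ℝ => cexp (s * x - Real.exp x) := by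
  have := Complex.GammaIntegral_convergent hs
  rw [integrableOn_Ioi_iff_integrable_exp] at this
  simpa only [exp_mul_gamma_integrand] using this

theorem integral_cexp_sub_exp {s : ℂ} (hs : 0 < s.re) :
    ∫ x : ℝ, cexp (s * x - Real.exp x) = Gamma s := by
  rw [Complex.Gamma_eq_integral hs, GammaIntegral, integral_Ioi_eq_integral_exp]
  simp only [exp_mul_gamma_integrand]

theorem integrable_cexp_sub_exp_neg {s : ℂ} (hs : s.re < 0) :
    Integrable fun x : ℝ => cexp (s * x - Real.exp (-x)) := by
  have := (integrable_cexp_sub_exp (s := -s) (by simpa using hs)).comp_neg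
  simpa using this

theorem integral_cexp_sub_exp_neg {s : ℂ} (hs : s.re < 0) :
    ∫ x : ℝ, cexp (s * x - Real.exp (-x)) = Gamma (-s) := by
  rw [← integral_cexp_sub_exp (s := -s) (by simpa using hs), ← integral_neg_eq_self]
  simp

theorem cexp_gauss_eq (s : ℂ) (x : ℝ) :
    cexp (s * x - Real.pi ^ 2 * Real.exp (2 * x)) =
      cexp (-s * Real.log Real.pi) * cexp (s / 2 * ((2 * (x + Real.log Real.pi) : ℝ) : ℂ) -
        Real.exp (2 * (x + Real.log Real.pi))) := by
  rw [← Complex.exp_add]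
  congr 1
  rw [show 2 * (x + Real.log Real.pi) = 2 * x + (Real.log Real.pi + Real.log Real.pi) by ring,
    Real.exp_add, Real.exp_add, Real.exp_log Real.pi_pos]
  push_cast
  ring

theorem integrable_cexp_gauss {s : ℂ} (hs : 0 < s.re) :
    Integrable fun x : ℝ => cexp (s * x - Real.pi ^ 2 * Real.exp (2 * x)) := by
  simp only [cexp_gauss_eq]
  refine Integrable.const_mul ?_ _
  have h := integrable_cexp_sub_exp (s := s / 2) (by simpa using hs)
  exact (h.comp_mul_left' (two_ne_zero)).comp_add_right (Real.log Real.pi)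

theorem integral_cexp_gauss {s : ℂ} (hs : 0 < s.re) :
    ∫ x : ℝ, cexp (s * x - Real.pi ^ 2 * Real.exp (2 * x)) =
      cexp (-s * Real.log Real.pi) * (2⁻¹ * Gamma (s / 2)) := by
  simp only [cexp_gauss_eq]
  rw [integral_const_mul, integral_add_right_eq_self (fun x : ℝ =>
    cexp (s / 2 * ((2 * x : ℝ) : ℂ) - Real.exp (2 * x))),
    Measure.integral_comp_mul_left (fun x : ℝ => cexp (s / 2 * (x : ℂ) - Real.exp x)),
    integral_cexp_sub_exp (by simpa using hs)]
  simp

theorem pi_cpow (s : ℂ) : (Real.pi : ℂ) ^ s = cexp (s * Real.log Real.pi) := by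
  rw [cpow_def_of_ne_zero (by simp), ← ofReal_log Real.pi_pos.le, mul_comm]

/-- The integrand of the one-variable kernel whose Laplace transform is a product of two gamma
factors. -/
def barnesKernel (p q : ℂ) (v τ : ℝ) : ℂ :=
  cexp ((q - p) / 2 * τ - Real.exp (-τ)) *
    cexp (q * v - Real.pi ^ 2 * Real.exp (2 * v + τ))

theorem continuous_barnesKernel (p q : ℂ) :
    Continuous fun x : ℝ × ℝ => barnesKernel p q x.1 x.2 := by
  unfold barnesKernel
  fun_prop

theorem norm_barnesKernel_le {p q : ℂ} {c : ℝ} (hq : c < q.re) (v τ : ℝ) :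
    ‖barnesKernel p q v τ‖ ≤ Real.exp ((q.re - c) ^ 2 / 8) *
      (Real.exp (c * v) * ‖cexp ((c - p) / 2 * τ - Real.exp (-τ))‖) := by
  unfold barnesKernel
  simp only [norm_mul, Complex.norm_exp]
  rw [← Real.exp_add, ← Real.exp_add, ← Real.exp_add]
  apply Real.exp_le_exp.2
  have e1 : ((q - p) / 2 * τ - Real.exp (-τ)).re = (q.re - p.re) / 2 * τ - Real.exp (-τ) := by
    have : (q - p) / 2 * τ - Real.exp (-τ) =
      (q - p) * ((1 / 2 * τ : ℝ) : ℂ) - ((Real.exp (-τ) : ℝ) : ℂ) := by push_cast; ring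
    rw [this, sub_re, re_mul_ofReal, ofReal_re, sub_re]; ring
  have e2 : ((c - p) / 2 * τ - Real.exp (-τ)).re = (c - p.re) / 2 * τ - Real.exp (-τ) := by
    have : (c - p) / 2 * τ - Real.exp (-τ) =
      (c - p) * ((1 / 2 * τ : ℝ) : ℂ) - ((Real.exp (-τ) : ℝ) : ℂ) := by push_cast; ring
    rw [this, sub_re, re_mul_ofReal, ofReal_re, sub_re, ofReal_re]; ring
  have e3 : (q * v - Real.pi ^ 2 * Real.exp (2 * v + τ)).re =
      q.re * v - Real.pi ^ 2 * Real.exp (2 * v + τ) := by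
    have : q * v - Real.pi ^ 2 * Real.exp (2 * v + τ) =
      q * (v : ℂ) - ((Real.pi ^ 2 * Real.exp (2 * v + τ) : ℝ) : ℂ) := by push_cast; ring
    rw [this, sub_re, re_mul_ofReal, ofReal_re]
  rw [e1, e2, e3]
  have hb : ∀ w : ℝ, (q.re - c) / 2 * w - Real.pi ^ 2 * Real.exp w ≤ (q.re - c) ^ 2 / 8 := by
    intro w
    have hpi : 1 ≤ Real.pi ^ 2 := by nlinarith [Real.pi_gt_three]
    have he : Real.exp w ≤ Real.pi ^ 2 * Real.exp w := by nlinarith [Real.exp_pos w]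
    rcases le_total w 0 with hw | hw
    · nlinarith [Real.exp_pos w, sq_nonneg (q.re - c)]
    · have := Real.quadratic_le_exp_of_nonneg hw
      nlinarith [sq_nonneg ((q.re - c) / 2 - w)]
  have := hb (2 * v + τ)
  linarith

theorem integrable_Gamma_div_two {q : ℂ} {c : ℝ} (hq : c < q.re) :
    Integrable fun t : ℝ => Gamma ((q - (c + t * I)) / 2) := by
  have h := integrable_Gamma_vertical (b := (q.re - c) / 2) (by linarith)
  have h2 := (h.comp_div (two_ne_zero)).comp_sub_left q.im
  refine h2.congr (.of_forall fun t => ?_)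
  refine congrArg Gamma ?_
  apply Complex.ext <;> simp

theorem integral_cexp_mul_Gamma_div_two {q : ℂ} {c : ℝ} (hq : c < q.re) (w : ℝ) :
    ∫ t : ℝ, cexp ((w / 2 + Real.log Real.pi) * (c + t * I)) * Gamma ((q - (c + t * I)) / 2) =
      4 * Real.pi * cexp (q * (w / 2 + Real.log Real.pi) - Real.pi ^ 2 * Real.exp w) := by
  have hL : Real.exp (w + 2 * Real.log Real.pi) = Real.pi ^ 2 * Real.exp w := by
    rw [Real.exp_add, two_mul, Real.exp_add, Real.exp_log Real.pi_pos]; ring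
  have h := integral_cpow_mul_Gamma_vertical (b := (q.re - c) / 2) (by linarith)
    (Real.exp_pos (w + 2 * Real.log Real.pi))
  set F : ℝ → ℂ := fun t => ((Real.exp (w + 2 * Real.log Real.pi) : ℝ) : ℂ) ^
    (-(((q.re - c) / 2 : ℝ) + t * I)) * Gamma (((q.re - c) / 2 : ℝ) + t * I) with hF
  have h2 : ∫ t : ℝ, F ((q.im - t) / 2) = 2 * ∫ t, F t := by
    rw [integral_sub_left_eq_self (fun u => F (u / 2)), Measure.integral_comp_div]
    simp
  have h3 : ∀ t : ℝ, cexp ((w / 2 + Real.log Real.pi) * (c + t * I)) *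
      Gamma ((q - (c + t * I)) / 2) =
        cexp (q * (w / 2 + Real.log Real.pi)) * F ((q.im - t) / 2) := by
    intro t
    have e : ((((q.re - c) / 2 : ℝ) : ℂ) + ((q.im - t) / 2 : ℝ) * I) =
        (q - (c + t * I)) / 2 := by
      apply Complex.ext <;> simp
    simp only [hF]
    rw [e, ofReal_exp_cpow, ← mul_assoc, ← Complex.exp_add]
    congr 2
    push_cast
    ring
  simp_rw [h3]
  rw [integral_const_mul, h2, h, hL, sub_eq_add_neg, Complex.exp_add]
  push_cast
  ring

theorem norm_GammaR_le {s : ℂ} (hs : 0 < s.re) :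
    ‖GammaR s‖ ≤ Real.exp (-s.re / 2 * Real.log Real.pi) * Real.Gamma (s.re / 2) := by
  have h := norm_Gamma_le_of_re_pos (s := s / 2) (by simpa using hs)
  rw [GammaR, pi_cpow, norm_mul, Complex.norm_exp, re_mul_ofReal]
  simp only [div_ofNat_re, neg_re] at h ⊢
  gcongr

theorem integrable_GammaR_vertical {q : ℂ} {c : ℝ} (hq : c < q.re) :
    Integrable fun t : ℝ => GammaR (q - (c + t * I)) := by
  unfold GammaR
  refine (integrable_Gamma_div_two hq).bdd_mul
    (c := Real.exp (-(q.re - c) / 2 * Real.log Real.pi)) ?_ (.of_forall fun t => ?_)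
  · simp_rw [pi_cpow]
    exact Continuous.aestronglyMeasurable (by fun_prop)
  · rw [pi_cpow, Complex.norm_exp, re_mul_ofReal]
    simp

theorem integrable_GammaR_mul_GammaR {p q : ℂ} {c : ℝ} (hp : c < p.re) (hq : c < q.re) :
    Integrable fun t : ℝ => GammaR (p - (c + t * I)) * GammaR (q - (c + t * I)) := by
  refine (integrable_GammaR_vertical hq).bdd_mul
    (integrable_GammaR_vertical hp).aestronglyMeasurable
    (c := Real.exp (-(p.re - c) / 2 * Real.log Real.pi) * Real.Gamma ((p.re - c) / 2))
    (.of_forall fun t => ?_)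
  have := norm_GammaR_le (s := p - (c + t * I)) (by simpa using hp)
  simpa using this

theorem integral_cexp_mul_GammaR_mul_GammaR {p q : ℂ} {c : ℝ} (hp : c < p.re) (hq : c < q.re)
    (v : ℝ) :
    ∫ t : ℝ, cexp (v * (c + t * I)) * (GammaR (p - (c + t * I)) * GammaR (q - (c + t * I))) =
      4 * Real.pi * cexp ((q - p) / 2 * Real.log Real.pi) * ∫ τ : ℝ, barnesKernel p q v τ := by
  have hK := integrable_cexp_sub_exp_neg (s := (c - p) / 2) (by simp; linarith)
  have hint : Integrable (Function.uncurry fun t τ : ℝ =>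
      cexp ((v + τ / 2 + Real.log Real.pi) * (c + t * I)) * Gamma ((q - (c + t * I)) / 2) *
        cexp (-p / 2 * τ - Real.exp (-τ))) (volume.prod volume) := by
    have hm := (integrable_Gamma_div_two hq).mul_prod hK
    have := hm.bdd_mul (f := fun x : ℝ × ℝ =>
        cexp ((v + Real.log Real.pi) * c + (v + x.2 / 2 + Real.log Real.pi) * (x.1 * I)))
      (c := Real.exp ((v + Real.log Real.pi) * c))
      (Continuous.aestronglyMeasurable (by fun_prop)) (.of_forall fun x => by
        rw [Complex.norm_exp]
        simp)
    refine this.congr (.of_forall fun x => ?_)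
    simp only [Function.uncurry]
    rw [mul_left_comm, ← Complex.exp_add, mul_right_comm, ← Complex.exp_add, mul_comm]
    congr 2
    ring
  have h1 : ∀ t : ℝ, cexp (v * (c + t * I)) *
      (GammaR (p - (c + t * I)) * GammaR (q - (c + t * I))) =
      cexp (-(p + q) / 2 * Real.log Real.pi) * ∫ τ : ℝ,
        cexp ((v + τ / 2 + Real.log Real.pi) * (c + t * I)) * Gamma ((q - (c + t * I)) / 2) *
        cexp (-p / 2 * τ - Real.exp (-τ)) := by
    intro t
    have hre : (-((p - (c + t * I)) / 2)).re < 0 := by simp; linarith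
    have hG := integral_cexp_sub_exp_neg hre
    rw [neg_neg] at hG
    have h2 : ∀ τ : ℝ, cexp ((v + τ / 2 + Real.log Real.pi) * (c + t * I)) *
        Gamma ((q - (c + t * I)) / 2) * cexp (-p / 2 * τ - Real.exp (-τ)) =
        cexp ((v + Real.log Real.pi) * (c + t * I)) * Gamma ((q - (c + t * I)) / 2) *
          cexp (-((p - (c + t * I)) / 2) * τ - Real.exp (-τ)) := by
      intro τ
      rw [mul_right_comm, ← Complex.exp_add, mul_right_comm, ← Complex.exp_add]
      congr 2
      ring
    simp_rw [h2]
    rw [integral_const_mul, hG, GammaR, GammaR, pi_cpow, pi_cpow]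
    have h3 : cexp (v * (c + t * I)) * (cexp (-(p - (c + t * I)) / 2 * Real.log Real.pi) *
        cexp (-(q - (c + t * I)) / 2 * Real.log Real.pi)) =
        cexp (-(p + q) / 2 * Real.log Real.pi) *
          cexp ((v + Real.log Real.pi) * (c + t * I)) := by
      rw [← Complex.exp_add, ← Complex.exp_add, ← Complex.exp_add]
      congr 1
      ring
    linear_combination (Gamma ((p - (c + t * I)) / 2) * Gamma ((q - (c + t * I)) / 2)) * h3
  simp_rw [h1]
  rw [integral_const_mul, integral_integral_swap hint, ← integral_const_mul,
    ← integral_const_mul]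
  refine integral_congr_ae (.of_forall fun τ => ?_)
  simp only
  rw [integral_mul_const]
  have h4 := integral_cexp_mul_Gamma_div_two hq (2 * v + τ)
  have h5 : (((2 * v + τ : ℝ) : ℂ) / 2 + Real.log Real.pi) = v + τ / 2 + Real.log Real.pi := by
    push_cast; ring
  rw [h5] at h4
  rw [h4, barnesKernel]
  have h6 : cexp (-(p + q) / 2 * Real.log Real.pi) *
      (cexp (q * (v + τ / 2 + Real.log Real.pi) - Real.pi ^ 2 * Real.exp (2 * v + τ)) *
        cexp (-p / 2 * τ - Real.exp (-τ))) =
      cexp ((q - p) / 2 * Real.log Real.pi) * (cexp ((q - p) / 2 * τ - Real.exp (-τ)) *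
        cexp (q * v - Real.pi ^ 2 * Real.exp (2 * v + τ))) := by
    rw [← Complex.exp_add, ← Complex.exp_add, ← Complex.exp_add, ← Complex.exp_add]
    congr 1
    ring
  linear_combination 4 * Real.pi * h6

theorem barnesKernel_eq (p q : ℂ) (v τ : ℝ) :
    barnesKernel p q v τ = cexp (-p / 2 * τ - Real.exp (-τ)) *
      cexp (q * (v + τ / 2 : ℝ) - Real.pi ^ 2 * Real.exp (2 * (v + τ / 2))) := by
  rw [barnesKernel, ← Complex.exp_add, ← Complex.exp_add,
    show 2 * (v + τ / 2) = 2 * v + τ by ring]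
  congr 1
  push_cast
  ring

theorem integrable_mul_comp_succAbove {m : ℕ} (i : Fin (m + 1)) {f : ℝ → ℂ}
    {g : (Fin m → ℝ) → ℂ} (hf : Integrable f) (hg : Integrable g) :
    Integrable fun x : Fin (m + 1) → ℝ => f (x i) * g (fun j => x (i.succAbove j)) :=
  (volume_preserving_piFinSuccAbove (fun _ : Fin (m + 1) => ℝ) i).integrable_comp_of_integrable
    (hf.mul_prod hg)

theorem integral_mul_comp_succAbove {m : ℕ} (i : Fin (m + 1)) (f : ℝ → ℂ)
    (g : (Fin m → ℝ) → ℂ) :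
    ∫ x : Fin (m + 1) → ℝ, f (x i) * g (fun j => x (i.succAbove j)) =
      (∫ t, f t) * ∫ y, g y := by
  rw [← integral_prod_mul f g]
  exact (volume_preserving_piFinSuccAbove (fun _ : Fin (m + 1) => ℝ) i).integral_comp'
    (fun z : ℝ × (Fin m → ℝ) => f z.1 * g z.2)

/-- The joint integrand of the Whittaker recursion and the Mellin transform, in logarithmic
coordinates. -/
def recIntegrand {m : ℕ} (φ : (Fin m → ℝ) → ℂ) (p q : Fin (m + 1) → ℂ)
    (z : (Fin (m + 1) → ℝ) × (Fin (m + 1) → ℝ)) : ℂ :=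
  φ (fun j => z.2 j.succ + (z.1 j.succ - z.1 j.castSucc) / 2) *
    ∏ j, barnesKernel (p j) (q j) (z.2 j) (z.1 j)

/-- The integrand `recIntegrand` after a shear that decouples the variables. -/
def shearIntegrand {m : ℕ} (φ : (Fin m → ℝ) → ℂ) (p q : Fin (m + 1) → ℂ)
    (z : (Fin (m + 1) → ℝ) × (Fin (m + 1) → ℝ)) : ℂ :=
  (cexp (-p (Fin.last m) / 2 * z.1 (Fin.last m) - Real.exp (-z.1 (Fin.last m))) *
    ∏ j : Fin m, barnesKernel (p j.castSucc) (q j.succ) (z.2 j.succ) (z.1 j.castSucc)) *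
  (cexp (q 0 * z.2 0 - Real.pi ^ 2 * Real.exp (2 * z.2 0)) * φ (fun j => z.2 j.succ))

/-- The shift of the shear relating `recIntegrand` and `shearIntegrand`. -/
def shearShift {m : ℕ} (τ : Fin (m + 1) → ℝ) : Fin (m + 1) → ℝ :=
  Fin.cons (τ 0 / 2) (fun j : Fin m => (τ j.succ - τ j.castSucc) / 2)

theorem recIntegrand_eq_shearIntegrand {m : ℕ} (φ : (Fin m → ℝ) → ℂ) (p q : Fin (m + 1) → ℂ)
    (z : (Fin (m + 1) → ℝ) × (Fin (m + 1) → ℝ)) :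
    recIntegrand φ p q z = shearIntegrand φ p q (z.1, z.2 + shearShift z.1) := by
  obtain ⟨τ, x⟩ := z
  simp only [recIntegrand, shearIntegrand, barnesKernel_eq, Finset.prod_mul_distrib, shearShift,
    Pi.add_apply, Fin.cons_succ, Fin.cons_zero]
  rw [Fin.prod_univ_castSucc (fun j => cexp (-p j / 2 * τ j - Real.exp (-τ j))),
    Fin.prod_univ_succ (fun j => cexp (q j * ((x j + τ j / 2 : ℝ) : ℂ) -
      Real.pi ^ 2 * Real.exp (2 * (x j + τ j / 2))))]
  have h : ∀ j : Fin m, x j.succ + (τ j.succ - τ j.castSucc) / 2 + τ j.castSucc / 2 =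
      x j.succ + τ j.succ / 2 := fun j => by ring
  simp only [h]
  ring

theorem measurePreserving_shear (m : ℕ) :
    MeasurePreserving (fun z : (Fin (m + 1) → ℝ) × (Fin (m + 1) → ℝ) =>
      (z.1, z.2 + shearShift z.1)) (volume.prod volume) (volume.prod volume) := by
  refine (MeasurePreserving.id volume).skew_product
    (g := fun τ x : Fin (m + 1) → ℝ => x + shearShift τ) ?_ (.of_forall fun τ => ?_)
  · have h : Measurable (shearShift : (Fin (m + 1) → ℝ) → _) := by
      refine measurable_pi_iff.2 fun j => ?_
      refine Fin.cases ?_ (fun j => ?_) j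
      · simp only [shearShift, Fin.cons_zero]; fun_prop
      · simp only [shearShift, Fin.cons_succ]; fun_prop
    exact measurable_snd.add (h.comp measurable_fst)
  · exact map_add_right_eq_self volume _

section

variable {m : ℕ} {φ : (Fin m → ℝ) → ℂ} {p q : Fin (m + 1) → ℂ} {c : Fin m → ℝ}

theorem integrable_shearIntegrand (hφ : Measurable φ)
    (hc : Integrable fun v => φ v * ∏ j, (Real.exp (c j * v j) : ℂ))
    (hp : ∀ j, c j < (p j.castSucc).re) (hq : ∀ j, c j < (q j.succ).re)
    (hq0 : 0 < (q 0).re) (hpm : 0 < (p (Fin.last m)).re) :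
    Integrable (shearIntegrand φ p q) (volume.prod volume) := by
  have hτ : Integrable fun τ : Fin (m + 1) → ℝ =>
      cexp (-p (Fin.last m) / 2 * τ (Fin.last m) - Real.exp (-τ (Fin.last m))) *
        ∏ j : Fin m, cexp ((c j - p j.castSucc) / 2 * τ j.castSucc -
          Real.exp (-τ j.castSucc)) := by
    have h1 := integrable_cexp_sub_exp_neg (s := -p (Fin.last m) / 2) (by simp; linarith)
    have h2 : Integrable fun τ : Fin m → ℝ =>
        ∏ j : Fin m, cexp ((c j - p j.castSucc) / 2 * τ j - Real.exp (-τ j)) :=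
      Integrable.fintype_prod (f := fun j (t : ℝ) =>
        cexp ((c j - p j.castSucc) / 2 * t - Real.exp (-t))) fun j =>
        integrable_cexp_sub_exp_neg (by simp; linarith [hp j])
    simpa using integrable_mul_comp_succAbove (Fin.last m) h1 h2
  have hx : Integrable fun x : Fin (m + 1) → ℝ =>
      cexp (q 0 * x 0 - Real.pi ^ 2 * Real.exp (2 * x 0)) *
        (φ (fun j => x j.succ) * ∏ j, (Real.exp (c j * x j.succ) : ℂ)) := by
    simpa using integrable_mul_comp_succAbove 0 (integrable_cexp_gauss hq0) hc
  refine Integrable.mono' ((hτ.mul_prod hx).norm.const_mul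
    (∏ j : Fin m, Real.exp (((q j.succ).re - c j) ^ 2 / 8))) ?_ (.of_forall fun z => ?_)
  · refine Measurable.aestronglyMeasurable ?_
    unfold shearIntegrand
    refine Measurable.mul (Measurable.mul (by fun_prop) ?_) (Measurable.mul (by fun_prop) ?_)
    · refine Finset.measurable_prod _ fun j _ => ?_
      exact (continuous_barnesKernel _ _).measurable.comp
        (f := fun z : (Fin (m + 1) → ℝ) × (Fin (m + 1) → ℝ) => (z.2 j.succ, z.1 j.castSucc))
        (by fun_prop)
    · exact hφ.comp (by fun_prop)
  · unfold shearIntegrand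
    simp only [norm_mul, norm_prod, norm_real, Real.norm_eq_abs, Real.abs_exp]
    have := Finset.prod_le_prod (s := Finset.univ)
      (f := fun j : Fin m =>
        ‖barnesKernel (p j.castSucc) (q j.succ) (z.2 j.succ) (z.1 j.castSucc)‖)
      (fun j _ => norm_nonneg _) (fun j _ => norm_barnesKernel_le (p := p j.castSucc) (hq j)
        (z.2 j.succ) (z.1 j.castSucc))
    simp only [Finset.prod_mul_distrib] at this
    refine (mul_le_mul_of_nonneg_right (mul_le_mul_of_nonneg_left this (norm_nonneg _))
      (by positivity)).trans_eq ?_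
    ring

theorem integrable_recIntegrand (hφ : Measurable φ)
    (hc : Integrable fun v => φ v * ∏ j, (Real.exp (c j * v j) : ℂ))
    (hp : ∀ j, c j < (p j.castSucc).re) (hq : ∀ j, c j < (q j.succ).re)
    (hq0 : 0 < (q 0).re) (hpm : 0 < (p (Fin.last m)).re) :
    Integrable (recIntegrand φ p q) (volume.prod volume) := by
  simp_rw [funext (recIntegrand_eq_shearIntegrand φ p q)]
  exact (measurePreserving_shear m).integrable_comp_of_integrable
    (integrable_shearIntegrand hφ hc hp hq hq0 hpm)

theorem integral_recIntegrand (hφ : Measurable φ)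
    (hc : Integrable fun v => φ v * ∏ j, (Real.exp (c j * v j) : ℂ))
    (hp : ∀ j, c j < (p j.castSucc).re) (hq : ∀ j, c j < (q j.succ).re)
    (hq0 : 0 < (q 0).re) (hpm : 0 < (p (Fin.last m)).re) :
    ∫ x, ∫ τ, recIntegrand φ p q (τ, x) =
      cexp (-q 0 * Real.log Real.pi) * (2⁻¹ * Gamma (q 0 / 2)) * Gamma (p (Fin.last m) / 2) *
        ∫ v, φ v * ∏ j, ∫ t, barnesKernel (p j.castSucc) (q j.succ) (v j) t := by
  have hG := integrable_shearIntegrand hφ hc hp hq hq0 hpm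
  have hT := measurePreserving_shear m
  have hGm : AEStronglyMeasurable (shearIntegrand φ p q)
      (Measure.map (fun z : (Fin (m + 1) → ℝ) × (Fin (m + 1) → ℝ) =>
        (z.1, z.2 + shearShift z.1)) (volume.prod volume)) :=
    hT.map_eq.symm ▸ hG.aestronglyMeasurable
  rw [← integral_prod_symm _ (integrable_recIntegrand hφ hc hp hq hq0 hpm),
    integral_congr_ae (.of_forall (recIntegrand_eq_shearIntegrand φ p q)),
    ← integral_map hT.aemeasurable hGm, hT.map_eq,
    integral_prod_symm _ hG]
  have hre : (-p (Fin.last m) / 2).re < 0 := by simp; linarith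
  have hin : ∀ x : Fin (m + 1) → ℝ, ∫ τ, shearIntegrand φ p q (τ, x) =
      Gamma (p (Fin.last m) / 2) * (cexp (q 0 * x 0 - Real.pi ^ 2 * Real.exp (2 * x 0)) *
        (φ (fun j => x j.succ) *
          ∏ j : Fin m, ∫ t, barnesKernel (p j.castSucc) (q j.succ) (x j.succ) t)) := by
    intro x
    simp only [shearIntegrand]
    rw [integral_mul_const]
    have h := integral_mul_comp_succAbove (Fin.last m)
      (fun t => cexp (-p (Fin.last m) / 2 * t - Real.exp (-t)))
      (fun τ => ∏ j : Fin m, barnesKernel (p j.castSucc) (q j.succ) (x j.succ) (τ j))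
    simp only [Fin.succAbove_last] at h
    rw [h, integral_cexp_sub_exp_neg hre, integral_fintype_prod_volume_eq_prod
      (fun j : Fin m => barnesKernel (p j.castSucc) (q j.succ) (x j.succ)),
      show -(-p (Fin.last m) / 2) = p (Fin.last m) / 2 by ring]
    ring
  simp_rw [hin]
  rw [integral_const_mul]
  have h := integral_mul_comp_succAbove (0 : Fin (m + 1))
      (fun t => cexp (q 0 * t - Real.pi ^ 2 * Real.exp (2 * t)))
      (fun v => φ v * ∏ j, ∫ t, barnesKernel (p j.castSucc) (q j.succ) (v j) t)
  simp only [Fin.zero_succAbove] at h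
  rw [h, integral_cexp_gauss hq0]
  ring

theorem integral_laplace_mul_GammaR
    (hc : Integrable fun v => φ v * ∏ j, (Real.exp (c j * v j) : ℂ))
    (hp : ∀ j, c j < (p j.castSucc).re) (hq : ∀ j, c j < (q j.succ).re) :
    ∫ t : Fin m → ℝ, (∫ v, φ v * ∏ j, cexp (v j * (c j + t j * I))) *
        ∏ j : Fin m, (GammaR (p j.castSucc - (c j + t j * I)) *
          GammaR (q j.succ - (c j + t j * I))) =
      (∏ j : Fin m, (4 * Real.pi * cexp ((q j.succ - p j.castSucc) / 2 * Real.log Real.pi))) *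
        ∫ v, φ v * ∏ j, ∫ t, barnesKernel (p j.castSucc) (q j.succ) (v j) t := by
  set H : Fin m → ℝ → ℂ := fun j t => GammaR (p j.castSucc - (c j + t * I)) *
          GammaR (q j.succ - (c j + t * I)) with hH
  have hHi : Integrable fun t : Fin m → ℝ => ∏ j, H j (t j) :=
    Integrable.fintype_prod fun j => integrable_GammaR_mul_GammaR (hp j) (hq j)
  have hint : Integrable (Function.uncurry fun t v : Fin m → ℝ =>
      (φ v * ∏ j, cexp (v j * (c j + t j * I))) * ∏ j, H j (t j)) (volume.prod volume) := by
    have := (hHi.mul_prod hc).bdd_mul (c := 1)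
      (f := fun x : (Fin m → ℝ) × (Fin m → ℝ) => ∏ j, cexp ((x.2 j * x.1 j : ℝ) * I))
      (Continuous.aestronglyMeasurable (by fun_prop)) (.of_forall fun x => by
        simp only [norm_prod, norm_exp_ofReal_mul_I, Finset.prod_const_one, le_refl])
    refine this.congr (.of_forall fun x => ?_)
    simp only [Function.uncurry]
    have h : ∏ j, cexp (x.2 j * (c j + x.1 j * I)) =
        (∏ j, cexp ((x.2 j * x.1 j : ℝ) * I)) * ∏ j, (Real.exp (c j * x.2 j) : ℂ) := by
      rw [← Finset.prod_mul_distrib]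
      refine Finset.prod_congr rfl fun j _ => ?_
      rw [ofReal_exp, ← Complex.exp_add]
      congr 1
      push_cast
      ring
    rw [h]
    ring
  simp_rw [← integral_mul_const]
  rw [integral_integral_swap hint, ← integral_const_mul]
  refine integral_congr_ae (.of_forall fun v => ?_)
  simp only [mul_assoc (φ v), ← Finset.prod_mul_distrib]
  rw [integral_const_mul, integral_fintype_prod_volume_eq_prod
    (fun (j : Fin m) (t : ℝ) => cexp (v j * (c j + t * I)) * H j t)]
  rw [mul_left_comm, ← Finset.prod_mul_distrib]
  congr 1
  exact Finset.prod_congr rfl fun j _ =>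
    integral_cexp_mul_GammaR_mul_GammaR (hp j) (hq j) (v j)

end

theorem image_exp_pi (k : ℕ) :
    (fun (x : Fin k → ℝ) i => Real.exp (x i)) '' Set.univ = posSet k := by
  ext y
  simp only [Set.image_univ, Set.mem_range, posSet, Set.mem_ofPred_eq]
  constructor
  · rintro ⟨x, rfl⟩ j
    exact Real.exp_pos _
  · intro h
    exact ⟨fun i => Real.log (y i), funext fun i => Real.exp_log (h i)⟩

theorem integral_posSet {k : ℕ} (f : (Fin k → ℝ) → ℂ) :
    ∫ y in posSet k, f y =
      ∫ x : Fin k → ℝ, (∏ i, (Real.exp (x i) : ℂ)) * f fun i => Real.exp (x i) := by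
  have hd : ∀ x ∈ Set.univ, HasFDerivWithinAt (fun (x : Fin k → ℝ) i => Real.exp (x i))
      (ContinuousLinearMap.pi fun i => Real.exp (x i) •
        (ContinuousLinearMap.proj i : (Fin k → ℝ) →L[ℝ] ℝ)) Set.univ x := fun x _ => by
    refine (hasFDerivAt_pi.2 fun i => ?_).hasFDerivWithinAt
    exact (Real.hasDerivAt_exp (x i)).comp_hasFDerivAt x
      (ContinuousLinearMap.proj i : (Fin k → ℝ) →L[ℝ] ℝ).hasFDerivAt
  have hinj : Set.InjOn (fun (x : Fin k → ℝ) i => Real.exp (x i)) Set.univ :=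
    fun x _ y _ h => funext fun i => Real.exp_injective (congrFun h i)
  rw [← image_exp_pi, integral_image_eq_integral_abs_det_fderiv_smul volume MeasurableSet.univ
    hd hinj, setIntegral_univ]
  refine integral_congr_ae (.of_forall fun x => ?_)
  have hdet : (ContinuousLinearMap.pi fun i => Real.exp (x i) •
        (ContinuousLinearMap.proj i : (Fin k → ℝ) →L[ℝ] ℝ)).det = ∏ i, Real.exp (x i) := by
    rw [← Matrix.det_diagonal, ← LinearMap.det_toLin', Matrix.diagonal_toLin']
    rfl
  simp only [hdet, Finset.abs_prod, Real.abs_exp, real_smul, ofReal_prod]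

theorem extR_fin {k : ℕ} (t : Fin k → ℝ) (j : Fin k) : extR t j = t j := by
  simp [extR]

theorem extR_exp_of_lt {k : ℕ} (x : Fin k → ℝ) {j : ℕ} (hj : j < k) :
    extR (fun i => Real.exp (x i)) j = Real.exp (x ⟨j, hj⟩) := by
  simp [extR, hj]

theorem measurable_extR {k : ℕ} (j : ℕ) : Measurable fun t : Fin k → ℝ => extR t j := by
  unfold extR
  split_ifs
  · exact measurable_pi_apply _
  · exact measurable_const

theorem WhittAr_congr_s5 : ∀ (n : ℕ) (a : ℕ → ℂ) {y y' : ℕ → ℝ}, (∀ j < n - 1, y j = y' j) →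
    WhittAr n a y = WhittAr n a y'
  | 0, _, _, _, _ => rfl
  | 1, _, _, _, _ => rfl
  | 2, a, y, y', h => by simp only [WhittAr, h 0 (by norm_num)]
  | n + 3, a, y, y', h => by
    simp only [WhittAr]
    congr 1
    funext t
    congr 3
    · refine WhittAr_congr_s5 (n + 2) _ fun j hj => ?_
      rw [h (j + 1) (by omega)]
    · refine Finset.prod_congr rfl fun j hj => ?_
      rw [h j (by simpa using hj)]

theorem measurable_WhittAr : ∀ (n : ℕ) (a : ℕ → ℂ), Measurable (WhittAr n a)
  | 0, _ => measurable_const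
  | 1, _ => measurable_const
  | 2, a => by
    have h : Measurable fun y : ℕ → ℝ =>
        BesselK ((a 0 - a 1) / 2) (2 * Real.pi * y 0) := by
      unfold BesselK
      refine Measurable.const_mul ?_ _
      refine (StronglyMeasurable.integral_prod_right ?_).measurable
      refine Measurable.stronglyMeasurable ?_
      fun_prop
    refine (?_ : Measurable fun y => WhittAr 2 a y)
    simp only [WhittAr]
    exact Measurable.mul (by fun_prop) h
  | n + 3, a => by
    refine (?_ : Measurable fun y => WhittAr (n + 3) a y)
    simp only [WhittAr]
    refine (StronglyMeasurable.integral_prod_right ?_).measurable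
    refine Measurable.stronglyMeasurable ?_
    have hW := measurable_WhittAr (n + 2) (tildeA (n + 3) a)
    have he : ∀ j, Measurable fun z : (ℕ → ℝ) × (Fin (n + 2) → ℝ) => extR z.2 j :=
      fun j => (measurable_extR j).comp measurable_snd
    refine Measurable.mul (Measurable.mul (Measurable.mul ?_ ?_) ?_) ?_
    · exact hW.comp (f := fun z : (ℕ → ℝ) × (Fin (n + 2) → ℝ) => fun j =>
        z.1 (j + 1) * Real.sqrt (extR z.2 (j + 1) / extR z.2 j))
        (measurable_pi_iff.2 fun j => ((measurable_pi_apply _).comp measurable_fst).mul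
          ((he (j + 1)).div (he j)).sqrt)
    · fun_prop
    · fun_prop
    · fun_prop

/-- `WhittAr (m + 1) a` in logarithmic coordinates. -/
def logWhitt (m : ℕ) (a : ℕ → ℂ) (v : Fin m → ℝ) : ℂ :=
  WhittAr (m + 1) a (extR fun i => Real.exp (v i))

theorem measurable_logWhitt (m : ℕ) (a : ℕ → ℂ) : Measurable (logWhitt m a) := by
  refine (measurable_WhittAr (m + 1) a).comp (measurable_pi_iff.2 fun j => ?_)
  exact (measurable_extR j).comp (f := fun (v : Fin m → ℝ) i => Real.exp (v i)) (by fun_prop)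

/-- The power of `y_j` in the Whittaker recursion. -/
def recQ (m : ℕ) (a : ℕ → ℂ) (j : Fin (m + 1)) : ℂ :=
  ((m + 1 - j : ℕ) : ℂ) * a 0 / ((m + 1 : ℕ) : ℂ)

/-- The parameter paired with `recQ` in the kernels of the Whittaker recursion. -/
def recP (m : ℕ) (a : ℕ → ℂ) (j : Fin (m + 1)) : ℂ :=
  recQ m a j - ((m + 2 : ℕ) : ℂ) * a 0 / ((m + 1 : ℕ) : ℂ) +
    if j = Fin.last m then sumA (m + 2) a else 0

/-- The powers of `π` in the Whittaker recursion. -/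
def recConst (m : ℕ) (a : ℕ → ℂ) : ℂ :=
  (∏ j, cexp (recQ m a j * Real.log Real.pi)) *
    cexp (-(sumA (m + 2) a) / 2 * Real.log Real.pi)

theorem ofReal_pi_mul_exp_cpow (x : ℝ) (s : ℂ) :
    ((Real.pi * Real.exp x : ℝ) : ℂ) ^ s = cexp (s * Real.log Real.pi) * cexp (s * x) := by
  rw [ofReal_mul, mul_cpow_ofReal_nonneg Real.pi_pos.le (Real.exp_pos x).le, pi_cpow,
    ofReal_exp_cpow, mul_comm (x : ℂ)]

theorem rec_factor_eq (A B : ℂ) (x τ : ℝ) :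
    cexp ((-(Real.pi * Real.exp x) ^ 2 * Real.exp τ - 1 / Real.exp τ : ℝ) : ℂ) *
      ((Real.pi * Real.exp x : ℝ) : ℂ) ^ A * ((Real.exp τ : ℝ) : ℂ) ^ B =
      cexp (A * Real.log Real.pi) * barnesKernel (A - 2 * B) A x τ := by
  rw [ofReal_pi_mul_exp_cpow, ofReal_exp_cpow, barnesKernel]
  simp only [← Complex.exp_add]
  congr 1
  rw [one_div, ← Real.exp_neg, mul_pow, ← Real.exp_nat_mul, neg_mul, mul_assoc, ← Real.exp_add]
  push_cast
  ring

theorem barnesKernel_add_left (p q S : ℂ) (v τ : ℝ) :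
    barnesKernel (p + S) q v τ = barnesKernel p q v τ * cexp (-S / 2 * τ) := by
  simp only [barnesKernel, ← Complex.exp_add]
  congr 1
  ring

theorem barnesKernel_add_add (p q s : ℂ) (v τ : ℝ) :
    barnesKernel (s + p) (s + q) v τ = barnesKernel p q v τ * cexp (s * v) := by
  simp only [barnesKernel, ← Complex.exp_add]
  congr 1
  ring

theorem logWhitt_zero (a : ℕ → ℂ) (v : Fin 0 → ℝ) : logWhitt 0 a v = 1 := by
  simp [logWhitt, WhittAr]

theorem logWhitt_one (a : ℕ → ℂ) (x : Fin 1 → ℝ) :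
    logWhitt 1 a x = recConst 0 a *
      ∫ τ, recIntegrand (logWhitt 0 (tildeA 2 a)) (recP 0 a) (recQ 0 a) (τ, x) := by
  have hsum : sumA 2 a = a 0 + a 1 := by simp [sumA, Finset.sum_range_succ]
  have hq : recQ 0 a 0 = a 0 := by simp [recQ]
  have hp : recP 0 a 0 = a 1 := by
    simp [recP, hq, hsum]; ring
  have hint : ∫ τ, recIntegrand (logWhitt 0 (tildeA 2 a)) (recP 0 a) (recQ 0 a) (τ, x) =
      ∫ t : ℝ, barnesKernel (a 1) (a 0) (x 0) t := by
    simp only [recIntegrand, logWhitt_zero, one_mul]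
    rw [integral_fintype_prod_volume_eq_prod
      (fun (j : Fin 1) (t : ℝ) => barnesKernel (recP 0 a j) (recQ 0 a j) (x j) t)]
    simp [hq, hp]
  rw [hint, ← integral_sub_right_eq_self _ (x 0 + Real.log Real.pi), recConst]
  simp only [logWhitt, WhittAr, BesselK, integral_Ioi_eq_integral_exp]
  rw [show extR (fun i : Fin 1 => Real.exp (x i)) 0 = Real.exp (x 0) from
    extR_exp_of_lt x one_pos, ← mul_assoc, ← integral_const_mul, ← integral_const_mul]
  refine integral_congr_ae (.of_forall fun t => ?_)
  simp only [Fin.prod_univ_succ, Finset.univ_eq_empty, Finset.prod_empty, hq, hsum, mul_one]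
  rw [ofReal_exp_cpow, ofReal_exp_cpow, barnesKernel]
  have h0 : ((Real.exp t : ℝ) : ℂ) ≠ 0 := by simp
  have e1 : Real.exp (-(t - (x 0 + Real.log Real.pi))) =
      Real.pi * Real.exp (x 0) * (Real.exp t)⁻¹ := by
    rw [neg_sub, Real.exp_sub, Real.exp_add, Real.exp_log Real.pi_pos]; ring
  have e2 : Real.pi ^ 2 * Real.exp (2 * x 0 + (t - (x 0 + Real.log Real.pi))) =
      Real.pi * Real.exp (x 0) * Real.exp t := by
    rw [show 2 * x 0 + (t - (x 0 + Real.log Real.pi)) = x 0 + t - Real.log Real.pi by ring,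
      Real.exp_sub, Real.exp_add, Real.exp_log Real.pi_pos]
    field_simp
  have e2' := congrArg (fun r : ℝ => (r : ℂ)) e2
  rw [ofReal_mul, ofReal_pow] at e2'
  rw [e1, e2', mul_div_cancel₀ _ h0]
  rw [show ∀ u v w : ℂ, 2 * u * (1 / 2) * (v * w) = u * (v * w) by intros; ring]
  simp only [← Complex.exp_add]
  congr 1
  push_cast
  ring

theorem logWhitt_add_two (k : ℕ) (a : ℕ → ℂ) (x : Fin (k + 2) → ℝ) :
    logWhitt (k + 2) a x = recConst (k + 1) a *
      ∫ τ, recIntegrand (logWhitt (k + 1) (tildeA (k + 3) a)) (recP (k + 1) a)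
        (recQ (k + 1) a) (τ, x) := by
  rw [logWhitt, WhittAr, integral_posSet, ← integral_const_mul]
  refine integral_congr_ae (.of_forall fun τ => ?_)
  simp only [Finset.prod_range, extR_fin, rec_factor_eq]
  have hW : WhittAr (k + 2) (tildeA (k + 3) a)
      (fun j => extR (fun i => Real.exp (x i)) (j + 1) *
        Real.sqrt (extR (fun i => Real.exp (τ i)) (j + 1) / extR (fun i => Real.exp (τ i)) j)) =
      logWhitt (k + 1) (tildeA (k + 3) a)
        (fun j => x j.succ + (τ j.succ - τ j.castSucc) / 2) := by
    refine WhittAr_congr_s5 _ _ fun j hj => ?_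
    have hj' : j < k + 1 := hj
    rw [extR_exp_of_lt _ (by omega), extR_exp_of_lt _ (by omega), extR_exp_of_lt _ (by omega),
      extR_exp_of_lt _ hj', ← Real.exp_sub, Real.sqrt_eq_rpow, ← Real.exp_mul, ← Real.exp_add]
    congr 2
    simp only [Fin.succ_mk, Fin.castSucc_mk]
    ring
  have hlast : extR (fun i => Real.exp (τ i)) (k + 1) = Real.exp (τ (Fin.last (k + 1))) :=
    extR_exp_of_lt _ (by omega)
  have hprod : ∏ i, ((Real.exp (τ i) : ℝ) : ℂ) ≠ 0 :=
    Finset.prod_ne_zero_iff.2 fun i _ => by simp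
  have hK : ∀ j : Fin (k + 2), barnesKernel (recP (k + 1) a j) (recQ (k + 1) a j) (x j) (τ j) =
      barnesKernel (recQ (k + 1) a j - 2 * (((k + 3 : ℕ) : ℂ) * a 0 / (2 * ((k + 2 : ℕ) : ℂ))))
        (recQ (k + 1) a j) (x j) (τ j) *
        (if j = Fin.last (k + 1) then cexp (-(sumA (k + 3) a) / 2 * τ j) else 1) := by
    intro j
    rw [recP, barnesKernel_add_left]
    congr 2
    · push_cast
      field_simp
      ring
    · split_ifs <;> simp
  rw [hW, hlast, ofReal_pi_mul_exp_cpow, recIntegrand, recConst]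
  simp only [hK, Finset.prod_mul_distrib, Finset.prod_ite_eq', Finset.mem_univ, if_true]
  have hq : ∀ j : Fin (k + 2), ((k + 2 - j : ℕ) : ℂ) * a 0 / ((k + 2 : ℕ) : ℂ) =
      recQ (k + 1) a j := fun j => rfl
  simp only [hq]
  have aux : ∀ P W Q K c d : ℂ, P ≠ 0 →
      P * (W * (Q * K) * (c * d) * P⁻¹) = Q * c * (W * (K * d)) := by
    intros
    field_simp
  exact aux _ _ _ _ _ _ hprod

theorem logWhitt_succ (m : ℕ) (a : ℕ → ℂ) (x : Fin (m + 1) → ℝ) :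
    logWhitt (m + 1) a x = recConst m a *
      ∫ τ, recIntegrand (logWhitt m (tildeA (m + 2) a)) (recP m a) (recQ m a) (τ, x) := by
  cases m with
  | zero => exact logWhitt_one a x
  | succ k => exact logWhitt_add_two k a x

theorem Ufun_eq_integral_logWhitt (m : ℕ) (a s : ℕ → ℂ) :
    Ufun (m + 1) a s = ∫ v : Fin m → ℝ, logWhitt m a v * ∏ j, cexp (v j * s j) := by
  rw [Ufun, Nat.add_sub_cancel, integral_posSet]
  refine integral_congr_ae (.of_forall fun v => ?_)
  simp only [Finset.prod_range, extR_fin, ofReal_exp_cpow, Finset.prod_div_distrib]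
  have hprod : ∏ i, ((Real.exp (v i) : ℝ) : ℂ) ≠ 0 :=
    Finset.prod_ne_zero_iff.2 fun i _ => by simp
  rw [logWhitt, mul_left_comm, mul_div_cancel₀ _ hprod]

theorem logWhitt_succ_mul_prod (m : ℕ) (a : ℕ → ℂ) (s : Fin (m + 1) → ℂ)
    (x : Fin (m + 1) → ℝ) :
    logWhitt (m + 1) a x * ∏ j, cexp (x j * s j) = recConst m a *
      ∫ τ, recIntegrand (logWhitt m (tildeA (m + 2) a)) (s + recP m a) (s + recQ m a) (τ, x) := by
  rw [logWhitt_succ, mul_assoc, ← integral_mul_const]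
  congr 1
  refine integral_congr_ae (.of_forall fun τ => ?_)
  simp only [recIntegrand, Pi.add_apply, barnesKernel_add_add, Finset.prod_mul_distrib]
  rw [mul_assoc]
  simp only [mul_comm]

theorem recQ_re {m : ℕ} {a : ℕ → ℂ} (ha : (a 0).re = 0) (j : Fin (m + 1)) :
    (recQ m a j).re = 0 := by
  have : recQ m a j = a 0 * ((((m + 1 - j : ℕ) : ℝ) / ((m + 1 : ℕ) : ℝ) : ℝ) : ℂ) := by
    rw [recQ]; push_cast; ring
  rw [this, re_mul_ofReal, ha, zero_mul]

theorem recP_re {m : ℕ} {a : ℕ → ℂ} (ha : ∀ j < m + 2, (a j).re = 0) (j : Fin (m + 1)) :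
    (recP m a j).re = 0 := by
  have h0 := ha 0 (by omega)
  have h1 : ((m + 2 : ℕ) : ℂ) * a 0 / ((m + 1 : ℕ) : ℂ) =
      a 0 * ((((m + 2 : ℕ) : ℝ) / ((m + 1 : ℕ) : ℝ) : ℝ) : ℂ) := by
    push_cast; ring
  have h2 : (sumA (m + 2) a).re = 0 := by
    rw [sumA, re_sum]
    exact Finset.sum_eq_zero fun j hj => ha j (by simpa using hj)
  rw [recP, h1, add_re, sub_re, re_mul_ofReal, recQ_re h0, h0]
  split_ifs <;> simp [h2]

theorem tildeA_re {m : ℕ} {a : ℕ → ℂ} (ha : ∀ j < m + 2, (a j).re = 0) (j : ℕ)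
    (hj : j < m + 1) : (tildeA (m + 2) a j).re = 0 := by
  have : a 0 / (((m + 2 : ℕ) : ℂ) - 1) = a 0 * (((((m + 2 : ℕ) : ℝ) - 1)⁻¹ : ℝ) : ℂ) := by
    push_cast; ring
  rw [tildeA, this, add_re, re_mul_ofReal, ha 0 (by omega), ha (j + 1) (by omega)]
  simp

theorem integrable_logWhitt_mul_exp (m : ℕ) : ∀ (a : ℕ → ℂ), (∀ j < m + 1, (a j).re = 0) →
    ∀ σ : Fin m → ℝ, (∀ j, 0 < σ j) →
      Integrable fun v => logWhitt m a v * ∏ j, (Real.exp (σ j * v j) : ℂ) := by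
  induction m with
  | zero =>
    intro a _ σ _
    simp [logWhitt_zero]
  | succ m ih =>
    intro a ha σ hσ
    have hs : ∀ x : Fin (m + 1) → ℝ, ∏ j, (Real.exp (σ j * x j) : ℂ) =
        ∏ j, cexp (x j * (fun i => (σ i : ℂ)) j) := fun x => by
      refine Finset.prod_congr rfl fun j _ => ?_
      push_cast
      rw [mul_comm]
    simp_rw [hs, logWhitt_succ_mul_prod]
    refine Integrable.const_mul (Integrable.integral_prod_right
      (integrable_recIntegrand (c := fun j => min (σ j.castSucc) (σ j.succ) / 2)
        (measurable_logWhitt _ _) (ih _ (tildeA_re ha) _ fun j => ?_) (fun j => ?_) (fun j => ?_)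
        ?_ ?_)) _
    · have := lt_min (hσ j.castSucc) (hσ j.succ)
      positivity
    · have := lt_min (hσ j.castSucc) (hσ j.succ)
      have := min_le_left (σ j.castSucc) (σ j.succ)
      simp only [Pi.add_apply, add_re, ofReal_re, recP_re ha]
      linarith
    · have := lt_min (hσ j.castSucc) (hσ j.succ)
      have := min_le_right (σ j.castSucc) (σ j.succ)
      simp only [Pi.add_apply, add_re, ofReal_re, recQ_re (ha 0 (by omega))]
      linarith
    · simpa [recQ_re (ha 0 (by omega))] using hσ 0
    · simpa [recP_re ha] using hσ (Fin.last m)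

theorem sum_range_succ_sub_cast (m : ℕ) :
    ∑ j ∈ Finset.range (m + 1), ((m + 1 - j : ℕ) : ℂ) = (m + 1) * (m + 2) / 2 := by
  induction m with
  | zero => simp
  | succ m ih =>
    rw [Finset.sum_range_succ']
    simp only [Nat.add_sub_add_right, ih]
    push_cast
    ring

theorem sum_recQ (m : ℕ) (a : ℕ → ℂ) : ∑ j, recQ m a j = (m + 2) / 2 * a 0 := by
  simp only [recQ]
  rw [← Finset.sum_div, ← Finset.sum_mul,
    Fin.sum_univ_eq_sum_range (fun j => ((m + 1 - j : ℕ) : ℂ)), sum_range_succ_sub_cast]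
  have : (m : ℂ) + 1 ≠ 0 := by exact_mod_cast m.succ_ne_zero
  push_cast
  field_simp

theorem recP_eq (m : ℕ) (a : ℕ → ℂ) (j : Fin (m + 1)) :
    recP m a j = -(((j + 1 : ℕ) : ℂ) * a 0 / (((m + 2 : ℕ) : ℂ) - 1)) +
      if j = Fin.last m then sumA (m + 2) a else 0 := by
  have : (m : ℂ) + 1 ≠ 0 := by exact_mod_cast m.succ_ne_zero
  have h : ((m + 2 : ℕ) : ℂ) - 1 = (m : ℂ) + 1 := by push_cast; ring
  rw [recP, recQ, Nat.cast_sub j.2.le, h]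
  congr 1
  push_cast
  field_simp
  ring

theorem recConst_mul_cexp (m : ℕ) (a : ℕ → ℂ) (s : Fin (m + 1) → ℂ) :
    recConst m a * cexp (-(s + recQ m a) 0 * Real.log Real.pi) =
      cexp (-(s + recQ m a) 0 / 2 * Real.log Real.pi) *
        cexp (-(s + recP m a) (Fin.last m) / 2 * Real.log Real.pi) *
          ∏ j : Fin m, cexp (((s + recQ m a) j.succ - (s + recP m a) j.castSucc) / 2 *
            Real.log Real.pi) := by
  rw [recConst, ← Complex.exp_sum, ← Complex.exp_sum]
  simp only [← Complex.exp_add]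
  congr 1
  rw [← Finset.sum_mul, ← Finset.sum_mul, sum_recQ, ← Finset.sum_div, Finset.sum_sub_distrib]
  have hq := Fin.sum_univ_succ (s + recQ m a)
  have hp := Fin.sum_univ_castSucc (s + recP m a)
  have hm : (m : ℂ) + 1 ≠ 0 := by exact_mod_cast m.succ_ne_zero
  have hsub : ∑ j, (s + recP m a) j =
      ∑ j, (s + recQ m a) j - (m + 2) * a 0 + sumA (m + 2) a := by
    simp only [Pi.add_apply, recP, Finset.sum_add_distrib, Finset.sum_sub_distrib,
      Finset.sum_const, Finset.sum_ite_eq', Finset.mem_univ, if_true, Finset.card_univ,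
      Fintype.card_fin, nsmul_eq_mul]
    push_cast
    field_simp
    ring
  linear_combination (Real.log Real.pi / 2 : ℂ) * (hq - hp + hsub)

section

variable (m : ℕ) (a s z : ℕ → ℂ)

theorem left_arg_eq {i : ℕ} (hi : i < m) :
    s i - Zext (m + 2) a z (i + 1) - ((i + 1 : ℕ) : ℂ) * a 0 / (((m + 2 : ℕ) : ℂ) - 1) =
      s i + recP m a (Fin.castSucc ⟨i, hi⟩) - z i := by
  rw [recP_eq, if_neg (Fin.castSucc_lt_last _).ne, Zext, if_neg (by omega), if_pos (by omega)]
  simp only [Fin.val_castSucc, Nat.add_sub_cancel]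
  ring

theorem left_arg_last_eq :
    s m - Zext (m + 2) a z (m + 1) - ((m + 1 : ℕ) : ℂ) * a 0 / (((m + 2 : ℕ) : ℂ) - 1) =
      s m + recP m a (Fin.last m) := by
  rw [recP_eq, if_pos rfl, Zext, if_neg (by omega), if_neg (by omega)]
  simp only [Fin.val_last]
  ring

theorem right_arg_zero_eq :
    s 0 - Zext (m + 2) a z 0 + ((m + 2 - (0 + 1) : ℕ) : ℂ) * a 0 / (((m + 2 : ℕ) : ℂ) - 1) =
      s 0 + recQ m a 0 := by
  rw [recQ, Zext, if_pos rfl]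
  simp
  ring

theorem right_arg_succ_eq {i : ℕ} (hi : i < m) :
    s (i + 1) - Zext (m + 2) a z (i + 1) +
        ((m + 2 - (i + 1 + 1) : ℕ) : ℂ) * a 0 / (((m + 2 : ℕ) : ℂ) - 1) =
      s (i + 1) + recQ m a (Fin.succ ⟨i, hi⟩) - z i := by
  have h : ((m + 2 : ℕ) : ℂ) - 1 = ((m + 1 : ℕ) : ℂ) := by push_cast; ring
  rw [recQ, Zext, if_neg (by omega), if_pos (by omega), h]
  simp only [Fin.val_succ, Nat.add_sub_cancel,
    show m + 2 - (i + 1 + 1) = m + 1 - (i + 1) by omega]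
  ring

theorem prod_GammaR_eq :
    ∏ j ∈ Finset.Icc 1 (m + 1),
      GammaR (s (j - 1) - Zext (m + 2) a z j - (j : ℂ) * a 0 / (((m + 2 : ℕ) : ℂ) - 1)) *
        GammaR (s (j - 1) - Zext (m + 2) a z (j - 1) +
          ((m + 2 - j : ℕ) : ℂ) * a 0 / (((m + 2 : ℕ) : ℂ) - 1)) =
    GammaR (s 0 + recQ m a 0) * GammaR (s m + recP m a (Fin.last m)) *
      ∏ j : Fin m, (GammaR (s j + recP m a j.castSucc - z j) *
        GammaR (s (j + 1) + recQ m a j.succ - z j)) := by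
  have hI : Finset.Icc 1 (m + 1) = Finset.Ico 1 (m + 1 + 1) := by
    ext; simp
  rw [hI, Finset.prod_Ico_eq_prod_range, Nat.add_sub_cancel, Finset.prod_range]
  simp only [add_comm 1, Nat.add_sub_cancel, Finset.prod_mul_distrib]
  rw [Fin.prod_univ_castSucc]
  rw [Fin.prod_univ_succ (fun i : Fin (m + 1) => GammaR (s i - Zext (m + 2) a z i +
          ((m + 2 - (i + 1) : ℕ) : ℂ) * a 0 / (((m + 2 : ℕ) : ℂ) - 1)))]
  simp only [Fin.val_castSucc, Fin.val_last, Fin.val_succ, Fin.val_zero, left_arg_last_eq,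
    right_arg_zero_eq]
  have h1 : ∀ i : Fin m, s i - Zext (m + 2) a z (i + 1) -
      (((i : ℕ) + 1 : ℕ) : ℂ) * a 0 / (((m + 2 : ℕ) : ℂ) - 1) =
      s i + recP m a i.castSucc - z i := fun i => left_arg_eq m a s z i.2
  have h2 : ∀ i : Fin m, s (i + 1) - Zext (m + 2) a z (i + 1) +
        ((m + 2 - (i + 1 + 1) : ℕ) : ℂ) * a 0 / (((m + 2 : ℕ) : ℂ) - 1) =
      s (i + 1) + recQ m a i.succ - z i := fun i => right_arg_succ_eq m a s z i.2
  simp only [h1, h2]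
  ring

end

theorem Ufun_add_two (m : ℕ) (a : ℕ → ℂ) (ha : ∀ j < m + 2, (a j).re = 0) (s : ℕ → ℂ)
    (hs : ∀ j < m + 1, 0 < (s j).re) (c : ℕ → ℝ) (hc : ∀ i < m, 0 < c i)
    (h : ∀ j, 1 ≤ j → j ≤ m + 1 →
        0 < (s (j - 1) - Zext (m + 2) a (fun i => (c i : ℂ)) j -
              (j : ℂ) * a 0 / (((m + 2 : ℕ) : ℂ) - 1)).re ∧
        0 < (s (j - 1) - Zext (m + 2) a (fun i => (c i : ℂ)) (j - 1) +
              ((m + 2 - j : ℕ) : ℂ) * a 0 / (((m + 2 : ℕ) : ℂ) - 1)).re) :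
    Ufun (m + 2) a s =
      2⁻¹ / (4 * (Real.pi : ℂ) * Complex.I) ^ m *
        VIntK m c (fun z =>
          Ufun (m + 1) (tildeA (m + 2) a) z *
            ∏ j ∈ Finset.Icc 1 (m + 1),
              GammaR (s (j - 1) - Zext (m + 2) a z j -
                (j : ℂ) * a 0 / (((m + 2 : ℕ) : ℂ) - 1)) *
                GammaR (s (j - 1) - Zext (m + 2) a z (j - 1) +
                  ((m + 2 - j : ℕ) : ℂ) * a 0 / (((m + 2 : ℕ) : ℂ) - 1))) := by
  set S : Fin (m + 1) → ℂ := fun j => s j with hS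
  set φ := logWhitt m (tildeA (m + 2) a) with hφ
  have hp : ∀ j : Fin m, c j < ((S + recP m a) j.castSucc).re := fun j => by
    have := (h (j + 1) (by omega) (by omega)).1
    rw [Nat.add_sub_cancel, left_arg_eq m a s _ j.2, sub_re, ofReal_re] at this
    exact sub_pos.1 this
  have hq : ∀ j : Fin m, c j < ((S + recQ m a) j.succ).re := fun j => by
    have := (h (j + 1 + 1) (by omega) (by omega)).2
    rw [Nat.add_sub_cancel, right_arg_succ_eq m a s _ j.2, sub_re, ofReal_re] at this
    exact sub_pos.1 this
  have hq0 : 0 < ((S + recQ m a) 0).re := by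
    simpa [hS, recQ_re (ha 0 (by omega))] using hs 0 (by omega)
  have hpm : 0 < ((S + recP m a) (Fin.last m)).re := by
    simpa [hS, recP_re ha] using hs m (by omega)
  have hint := integrable_logWhitt_mul_exp m _ (tildeA_re ha) (fun j => c j) fun j => hc j j.2
  have hL : Ufun (m + 2) a s = recConst m a *
      ∫ x, ∫ τ, recIntegrand φ (S + recP m a) (S + recQ m a) (τ, x) := by
    rw [Ufun_eq_integral_logWhitt (m + 1) a s, ← integral_const_mul]
    exact integral_congr_ae (.of_forall fun x => logWhitt_succ_mul_prod m a S x)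
  rw [hL, integral_recIntegrand (measurable_logWhitt _ _) hint hp hq hq0 hpm]
  have hext : ∀ (t : Fin m → ℝ) (j : Fin m), extR0 t j = t j := fun t j => by simp [extR0]
  simp only [VIntK, prod_GammaR_eq, Ufun_eq_integral_logWhitt, hext]
  have hR := integral_laplace_mul_GammaR (p := S + recP m a) (q := S + recQ m a) hint hp hq
  simp only [Pi.add_apply, hS, Fin.val_castSucc, Fin.val_succ] at hR
  simp only [mul_left_comm _ (GammaR (s 0 + recQ m a 0) * GammaR (s m + recP m a (Fin.last m)))]
  rw [integral_const_mul, hR]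
  have hC := recConst_mul_cexp m a S
  simp only [Pi.add_apply, hS, Fin.val_castSucc, Fin.val_succ, Fin.val_zero, Fin.val_last] at hC ⊢
  rw [Finset.prod_mul_distrib, Finset.prod_const, Finset.card_univ, Fintype.card_fin, GammaR,
    GammaR, pi_cpow, pi_cpow]
  have hpow : 2⁻¹ / (4 * (Real.pi : ℂ) * I) ^ m * (I ^ m * (4 * (Real.pi : ℂ)) ^ m) = 2⁻¹ := by
    have h1 : (4 * (Real.pi : ℂ) * I) ^ m ≠ 0 := pow_ne_zero _ (by simp [Real.pi_ne_zero])
    rw [mul_comm (I ^ m), ← mul_pow, div_mul_cancel₀ _ h1]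
  set J := ∫ v, φ v * ∏ j : Fin m, ∫ t, barnesKernel (s j + recP m a j.castSucc)
    (s (j + 1) + recQ m a j.succ) (v j) t
  set G0 := Gamma ((s 0 + recQ m a 0) / 2)
  set Gm := Gamma ((s m + recP m a (Fin.last m)) / 2)
  set E0 := cexp (-(s 0 + recQ m a 0) / 2 * Real.log Real.pi)
  set Em := cexp (-(s m + recP m a (Fin.last m)) / 2 * Real.log Real.pi)
  set Q := ∏ j : Fin m, cexp ((s (j + 1) + recQ m a j.succ - (s j + recP m a j.castSucc)) / 2 *
    Real.log Real.pi)
  linear_combination (2⁻¹ * G0 * Gm * J) * hC - (E0 * G0 * Em * Gm * Q * J) * hpow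

/-- Mellin–Barnes recursion for `U_{n,a}` (Proposition 1.5 of Ishii–Stade),
together with the base case `n = 2`. -/
theorem U_mellin_barnes_recursion (n : ℕ) (hn : 3 ≤ n) (a : ℕ → ℂ)
    (ha : ∀ j < n, (a j).re = 0) (s : ℕ → ℂ) (hs : ∀ j < n - 1, 0 < (s j).re) :
    (∀ c : ℕ → ℝ,
      (∀ i < n - 2, 0 < c i) →
      (∀ j, 1 ≤ j → j ≤ n - 1 →
        0 < (s (j - 1) - Zext n a (fun i => (c i : ℂ)) j -
              (j : ℂ) * a 0 / ((n : ℂ) - 1)).re ∧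
        0 < (s (j - 1) - Zext n a (fun i => (c i : ℂ)) (j - 1) +
              ((n - j : ℕ) : ℂ) * a 0 / ((n : ℂ) - 1)).re) →
      Ufun n a s =
        2⁻¹ / (4 * (Real.pi : ℂ) * Complex.I) ^ (n - 2) *
          VIntK (n - 2) c (fun z =>
            Ufun (n - 1) (tildeA n a) z *
              ∏ j ∈ Finset.Icc 1 (n - 1),
                GammaR (s (j - 1) - Zext n a z j - (j : ℂ) * a 0 / ((n : ℂ) - 1)) *
                  GammaR (s (j - 1) - Zext n a z (j - 1) +
                    ((n - j : ℕ) : ℂ) * a 0 / ((n : ℂ) - 1)))) ∧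
    (∀ b : ℕ → ℂ, ∀ σ : ℂ, (b 0).re = 0 → (b 1).re = 0 → 0 < σ.re →
      Ufun 2 b (fun _ => σ) = 2⁻¹ * (GammaR (σ + b 0) * GammaR (σ + b 1))) := by
  refine ⟨fun c hc h => ?_, fun b σ h0 h1 hσ => ?_⟩
  · obtain ⟨m, rfl⟩ : ∃ m, n = m + 2 := ⟨n - 2, by omega⟩
    exact Ufun_add_two m a ha s hs c hc h
  · have hb : ∀ j < 0 + 2, (b j).re = 0 := fun j hj => by
      interval_cases j <;> assumption
    have hprod := prod_GammaR_eq 0 b (fun _ => σ)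
    have hsum : sumA 2 b = b 0 + b 1 := by simp [sumA, Finset.sum_range_succ]
    have hQ : recQ 0 b 0 = b 0 := by simp [recQ]
    have hP : recP 0 b (Fin.last 0) = b 1 := by
      rw [recP, if_pos rfl, show Fin.last 0 = 0 from rfl, hQ, hsum]
      push_cast
      ring
    have key := Ufun_add_two 0 b hb (fun _ => σ) (fun _ _ => hσ) (fun _ => 1) (by simp)
      fun j hj1 hj2 => by
        obtain rfl : j = 1 := by omega
        have hl := left_arg_last_eq 0 b (fun _ => σ) (fun _ => ((1 : ℝ) : ℂ))
        have hr := right_arg_zero_eq 0 b (fun _ => σ) (fun _ => ((1 : ℝ) : ℂ))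
        rw [hP] at hl
        rw [hQ] at hr
        constructor
        · refine lt_of_lt_of_eq ?_ (congrArg Complex.re hl).symm
          simpa [h1] using hσ
        · refine lt_of_lt_of_eq ?_ (congrArg Complex.re hr).symm
          simpa [h0] using hσ
    rw [key]
    simp only [hprod, VIntK, Ufun_eq_integral_logWhitt 0, logWhitt_zero, hQ, hP]
    have hvol : (volume : Measure (Fin 0 → ℝ)).real Set.univ = 1 := by
      simp [Measure.real, volume_pi]
    simp [hvol]

end
end
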